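/- Let Q be a hereditary graph class, let 1 ≤ r < ∞, and let W ∈ Q̂ be a graphon whose randomness support graphon 1_{rand(W)} is not K_r-free. Then there exists s ∈ {0,1,…,r} such that W^{(r,s)} ∈ Q̂. -/

import Mathlib

open MeasureTheory Set Filter

noncomputable section

/-- A graphon: a symmetric measurable function `ℝ → ℝ → ℝ` with values in `[0,1]`
(only its values on `[0,1]²` matter). -/
def IsGraphon (W : ℝ → ℝ → ℝ) : Prop :=
  (∀ x y, W x y = W y x) ∧ Measurable (Function.uncurry W) ∧
    ∀ x y, W x y ∈ Set.Icc (0 : ℝ) 1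

/-- The cut norm `‖U‖_□`, the supremum over measurable `S, T ⊆ [0,1]` of
`|∫_{S×T} U|`. -/
def cutNorm (U : ℝ → ℝ → ℝ) : ℝ :=
  sSup { r : ℝ | ∃ S T : Set ℝ, MeasurableSet S ∧ MeasurableSet T ∧
    S ⊆ Set.Icc 0 1 ∧ T ⊆ Set.Icc 0 1 ∧
    r = |∫ p in S ×ˢ T, U p.1 p.2| }

/-- `d_□(W₁, W₂) = ‖W₁ - W₂‖_□`. -/
def dCut (W₁ W₂ : ℝ → ℝ → ℝ) : ℝ := cutNorm (fun x y => W₁ x y - W₂ x y)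

/-- A Lebesgue-measure-preserving map `[0,1] → [0,1]`. -/
def IsMPSelf (σ : ℝ → ℝ) : Prop :=
  MeasureTheory.MeasurePreserving σ
      (MeasureTheory.volume.restrict (Set.Icc (0:ℝ) 1))
      (MeasureTheory.volume.restrict (Set.Icc (0:ℝ) 1)) ∧
    Set.MapsTo σ (Set.Icc (0:ℝ) 1) (Set.Icc (0:ℝ) 1)

/-- The cut distance `δ_□(W₁, W₂)`. -/
def deltaCut (W₁ W₂ : ℝ → ℝ → ℝ) : ℝ :=
  sInf { r : ℝ | ∃ σ₁ σ₂ : ℝ → ℝ, IsMPSelf σ₁ ∧ IsMPSelf σ₂ ∧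
    r = cutNorm (fun x y => W₁ (σ₁ x) (σ₁ y) - W₂ (σ₂ x) (σ₂ y)) }

/-- The binary entropy function `h` (base-2 logarithm; `logb 2 0 = 0` by convention,
so `h 0 = h 1 = 0`). -/
def binEnt (x : ℝ) : ℝ := -x * Real.logb 2 x - (1 - x) * Real.logb 2 (1 - x)

/-- `h̃ x = h (min x (1/2))`. -/
def htilde (x : ℝ) : ℝ := binEnt (min x (1/2))

/-- The entropy `Ent(W) = ∫₀¹∫₀¹ h(W(x,y)) dx dy` of a graphon. -/
def graphonEnt (W : ℝ → ℝ → ℝ) : ℝ :=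
  ∫ x in Set.Icc (0:ℝ) 1, ∫ y in Set.Icc (0:ℝ) 1, binEnt (W x y)

open Classical in
/-- The graphon `W_G` of a simple graph `G` on `{1, …, n}` (vertices as `Fin n`,
vertex `i : Fin n` representing `i+1`): `W_G x y = 1` iff `⌈nx⌉⌈ny⌉ ∈ E(G)`. -/
def graphonOfGraph {n : ℕ} (G : SimpleGraph (Fin n)) : ℝ → ℝ → ℝ := fun x y =>
  if ∃ i j : Fin n, G.Adj i j ∧ ⌈(n : ℝ) * x⌉ = ((i : ℕ) : ℤ) + 1 ∧
      ⌈(n : ℝ) * y⌉ = ((j : ℕ) : ℤ) + 1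
  then 1 else 0

/-- A labelled graph class: a set of graphs on `{1,…,n}` for each `n`. -/
abbrev GraphClass := ∀ n : ℕ, Set (SimpleGraph (Fin n))

/-- A graph class is closed under relabelling by permutations. -/
def IsGraphClass (Q : GraphClass) : Prop :=
  ∀ (n : ℕ) (π : Equiv.Perm (Fin n)) (G : SimpleGraph (Fin n)),
    G ∈ Q n → G.comap ⇑π ∈ Q n

/-- A hereditary graph class: a graph class closed under taking induced subgraphs
(relabelled by the order-preserving bijection). -/
def IsHereditary (Q : GraphClass) : Prop :=
  IsGraphClass Q ∧
    ∀ (m n : ℕ) (f : Fin m → Fin n), StrictMono f →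
      ∀ G ∈ Q n, G.comap f ∈ Q m

/-- `Q̂`: the set of graphons which are limits (in cut distance) of sequences of graphs in
the class `Q` whose orders tend to infinity. -/
def limitSet (Q : GraphClass) : Set (ℝ → ℝ → ℝ) :=
  { W | IsGraphon W ∧
    ∃ (nk : ℕ → ℕ) (Gk : ∀ k, SimpleGraph (Fin (nk k))),
      (∀ k, Gk k ∈ Q (nk k)) ∧ Filter.Tendsto nk Filter.atTop Filter.atTop ∧
      Filter.Tendsto (fun k => deltaCut (graphonOfGraph (Gk k)) W) Filter.atTop (nhds 0) }

/-- `C(n,2) = n(n-1)/2` as a real number. -/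
def choose2 (n : ℕ) : ℝ := (n : ℝ) * ((n : ℝ) - 1) / 2

open Classical in
/-- The step function `E[W | P]` obtained by averaging `W` over the products of the
parts of the partition `P` of `[0,1]`. -/
def condExpPart {k : ℕ} (P : Fin k → Set ℝ) (W : ℝ → ℝ → ℝ) : ℝ → ℝ → ℝ := fun x y =>
  ∑ i : Fin k, ∑ j : Fin k,
    if x ∈ P i ∧ y ∈ P j then ⨍ p in (P i) ×ˢ (P j), W p.1 p.2 else 0

/-- `W̄_n`: the step function of `W` for the partition of `[0,1]` into `n` consecutive
intervals of length `1/n`. -/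
def barStep (n : ℕ) (W : ℝ → ℝ → ℝ) : ℝ → ℝ → ℝ :=
  condExpPart (fun i : Fin n => Set.Ioc (((i : ℕ) : ℝ)/n) ((((i : ℕ) : ℝ) + 1)/n)) W

/-- `N̂_□(n, δ; W)`: the number of graphs `G` on `{1,…,n}` with `d_□(W_G, W) ≤ δ`. -/
def NhatCut (n : ℕ) (δ : ℝ) (W : ℝ → ℝ → ℝ) : ℕ :=
  Nat.card {G : SimpleGraph (Fin n) // dCut (graphonOfGraph G) W ≤ δ}

/-- `N_□(n, δ; W)`: the number of graphs `G` on `{1,…,n}` with `δ_□(W_G, W) ≤ δ`. -/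
def NCut (n : ℕ) (δ : ℝ) (W : ℝ → ℝ → ℝ) : ℕ :=
  Nat.card {G : SimpleGraph (Fin n) // deltaCut (graphonOfGraph G) W ≤ δ}

open Classical in
/-- The induced density `p(F; W)` of a graph `F` on `{1,…,k}` in a graphon `W`. -/
def inducedDensity {k : ℕ} (F : SimpleGraph (Fin k)) (W : ℝ → ℝ → ℝ) : ℝ :=
  ∫ x : Fin k → ℝ in Set.univ.pi (fun _ : Fin k => Set.Icc (0:ℝ) 1),
    ∏ i : Fin k, ∏ j : Fin k,
      if i < j then (if F.Adj i j then W (x i) (x j) else 1 - W (x i) (x j)) else 1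

open Classical in
/-- The randomness support graphon `1_{rand(W)}` of `W`. -/
def randIndicator (W : ℝ → ℝ → ℝ) : ℝ → ℝ → ℝ := fun x y =>
  if 0 < W x y ∧ W x y < 1 then 1 else 0

/-- A kernel `U` is `K_r`-free if `∏_{i<j} U(x_i, x_j) = 0` for a.e. `x ∈ [0,1]^r`. -/
def KFree (r : ℕ) (U : ℝ → ℝ → ℝ) : Prop :=
  ∀ᵐ x ∂(MeasureTheory.volume.restrict (Set.univ.pi fun _ : Fin r => Set.Icc (0:ℝ) 1)),
    (∏ i : Fin r, ∏ j : Fin r, if i < j then U (x i) (x j) else 1) = 0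

open Classical in
/-- The graphon `W^{(r,s)}`: equal to `1/2` off the diagonal blocks, `1` on the first `s`
diagonal blocks `I_i × I_i`, and `0` on the remaining diagonal blocks. -/
def Wrs (r s : ℕ) : ℝ → ℝ → ℝ := fun x y =>
  if ∃ i j : Fin r, i ≠ j ∧ x ∈ Set.Ioc (((i:ℕ):ℝ)/r) ((((i:ℕ):ℝ)+1)/r) ∧
      y ∈ Set.Ioc (((j:ℕ):ℝ)/r) ((((j:ℕ):ℝ)+1)/r)
  then 1/2
  else if ∃ i : Fin r, (i:ℕ) < s ∧ x ∈ Set.Ioc (((i:ℕ):ℝ)/r) ((((i:ℕ):ℝ)+1)/r) ∧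
      y ∈ Set.Ioc (((i:ℕ):ℝ)/r) ((((i:ℕ):ℝ)+1)/r)
  then 1 else 0

/-- `E_r = ⋃_{i ≠ j} I_i × I_j` where `I_i`, `i = 1, …, r`, are the consecutive
intervals of length `1/r` in `[0,1]`. -/
def Er (r : ℕ) : Set (ℝ × ℝ) :=
  ⋃ (i : Fin r) (j : Fin r) (_ : i ≠ j),
    (Set.Ioc (((i:ℕ):ℝ)/r) ((((i:ℕ):ℝ)+1)/r)) ×ˢ (Set.Ioc (((j:ℕ):ℝ)/r) ((((j:ℕ):ℝ)+1)/r))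

/-- `R_r`: the set of graphons equal to `1/2` on `E_r` and `{0,1}`-valued elsewhere
on `[0,1]²`. -/
def Rset (r : ℕ) : Set (ℝ → ℝ → ℝ) :=
  { W | IsGraphon W ∧ (∀ p ∈ Er r, W p.1 p.2 = 1/2) ∧
      ∀ p ∈ ((Set.Icc (0:ℝ) 1) ×ˢ (Set.Icc (0:ℝ) 1)) \ Er r,
        W p.1 p.2 = 0 ∨ W p.1 p.2 = 1 }

/-- A graphon is random-free if it is `{0,1}`-valued a.e. on `[0,1]²`. -/
def IsRandomFree (W : ℝ → ℝ → ℝ) : Prop :=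
  ∀ᵐ p ∂(MeasureTheory.volume.restrict ((Set.Icc (0:ℝ) 1) ×ˢ (Set.Icc (0:ℝ) 1))),
    W (Prod.fst p) (Prod.snd p) = 0 ∨ W (Prod.fst p) (Prod.snd p) = 1


theorem ramsey_aux (a b : ℕ) : ∃ M : ℕ, ∀ (V : Type) [DecidableEq V] (G : SimpleGraph V)
    (s : Finset V), M ≤ s.card →
      (∃ t ⊆ s, t.card = a ∧ ∀ x ∈ t, ∀ y ∈ t, x ≠ y → G.Adj x y) ∨
      (∃ t ⊆ s, t.card = b ∧ ∀ x ∈ t, ∀ y ∈ t, x ≠ y → ¬ G.Adj x y) := by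
  classical
  induction a generalizing b with
  | zero => exact ⟨0, fun V _ G s _ => Or.inl ⟨∅, by simp⟩⟩
  | succ a iha =>
    induction b with
    | zero => exact ⟨0, fun V _ G s _ => Or.inr ⟨∅, by simp⟩⟩
    | succ b ihb =>
      obtain ⟨M₁, h₁⟩ := iha (b + 1)
      obtain ⟨M₂, h₂⟩ := ihb
      refine ⟨M₁ + M₂ + 1, fun V _ G s hs => ?_⟩
      obtain ⟨v, hv⟩ : s.Nonempty := by
        rw [← Finset.card_pos]; omega
      have hcard : ((s.erase v).filter (fun x => G.Adj v x)).card +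
          ((s.erase v).filter (fun x => ¬ G.Adj v x)).card = (s.erase v).card :=
        Finset.card_filter_add_card_filter_not _
      have hc2 : (s.erase v).card = s.card - 1 := Finset.card_erase_of_mem hv
      by_cases hA : M₁ ≤ ((s.erase v).filter (fun x => G.Adj v x)).card
      · rcases h₁ V G _ hA with ⟨t, hts, htc, ht⟩ | ⟨t, hts, htc, ht⟩
        · left
          have hvt : v ∉ t := fun h => by simpa using hts h
          refine ⟨insert v t, ?_, by rw [Finset.card_insert_of_notMem hvt, htc], ?_⟩
          · intro x hx
            rcases Finset.mem_insert.1 hx with rfl | hx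
            · exact hv
            · have := hts hx
              simp at this
              exact this.1.2
          · intro x hx y hy hxy
            rcases Finset.mem_insert.1 hx with hx1 | hx1 <;>
            rcases Finset.mem_insert.1 hy with hy1 | hy1
            · exact absurd (hx1.trans hy1.symm) hxy
            · have := hts hy1
              simp at this
              rw [hx1]
              exact this.2
            · have := hts hx1
              simp at this
              rw [hy1]
              exact this.2.symm
            · exact ht x hx1 y hy1 hxy
        · right
          refine ⟨t, ?_, htc, ht⟩
          intro x hx
          have := hts hx
          simp at this
          exact this.1.2
      · have hB : M₂ ≤ ((s.erase v).filter (fun x => ¬ G.Adj v x)).card := by omega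
        rcases h₂ V G _ hB with ⟨t, hts, htc, ht⟩ | ⟨t, hts, htc, ht⟩
        · left
          refine ⟨t, ?_, htc, ht⟩
          intro x hx
          have := hts hx
          simp at this
          exact this.1.2
        · right
          have hvt : v ∉ t := fun h => by simpa using hts h
          refine ⟨insert v t, ?_, by rw [Finset.card_insert_of_notMem hvt, htc], ?_⟩
          · intro x hx
            rcases Finset.mem_insert.1 hx with rfl | hx
            · exact hv
            · have := hts hx
              simp at this
              exact this.1.2
          · intro x hx y hy hxy
            rcases Finset.mem_insert.1 hx with hx1 | hx1 <;>
            rcases Finset.mem_insert.1 hy with hy1 | hy1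
            · exact absurd (hx1.trans hy1.symm) hxy
            · have := hts hy1
              simp at this
              rw [hx1]
              exact this.2
            · have := hts hx1
              simp at this
              rw [hy1]
              exact fun h => this.2 h.symm
            · exact ht x hx1 y hy1 hxy

theorem ramsey_fin (m : ℕ) : ∃ M : ℕ, ∀ G : SimpleGraph (Fin M),
    ∃ (c : Bool) (g : Fin m → Fin M), Function.Injective g ∧
      ∀ i j, i ≠ j → (G.Adj (g i) (g j) ↔ c = true) := by
  obtain ⟨M, hM⟩ := ramsey_aux m m
  refine ⟨M, fun G => ?_⟩
  rcases hM (Fin M) G Finset.univ (by simp) with ⟨t, -, htc, ht⟩ | ⟨t, -, htc, ht⟩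
  · refine ⟨true, fun i => t.orderEmbOfFin htc i, (t.orderEmbOfFin htc).injective, ?_⟩
    intro i j hij
    simp only [iff_true]
    exact ht _ (Finset.orderEmbOfFin_mem _ _ _) _ (Finset.orderEmbOfFin_mem _ _ _)
      (fun h => hij ((t.orderEmbOfFin htc).injective h))
  · refine ⟨false, fun i => t.orderEmbOfFin htc i, (t.orderEmbOfFin htc).injective, ?_⟩
    intro i j hij
    simp only [Bool.false_eq_true, iff_false]
    exact ht _ (Finset.orderEmbOfFin_mem _ _ _) _ (Finset.orderEmbOfFin_mem _ _ _)
      (fun h => hij ((t.orderEmbOfFin htc).injective h))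

theorem hereditary_inj {Q : GraphClass} (hQ : IsHereditary Q) {m n : ℕ} (f : Fin m → Fin n)
    (hf : Function.Injective f) (G : SimpleGraph (Fin n)) (hG : G ∈ Q n) :
    G.comap f ∈ Q m := by
  have h1 : StrictMono (f ∘ Tuple.sort f) :=
    (Tuple.monotone_sort f).strictMono_of_injective (hf.comp (Tuple.sort f).injective)
  have h2 := hQ.2 m n _ h1 G hG
  have h3 := hQ.1 m (Tuple.sort f)⁻¹ _ h2
  convert h3 using 1
  ext a b
  simp [SimpleGraph.comap_adj]

/-- `F` on vertex type `V` belongs to the (hereditary) class `Q`. -/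
def InQ (Q : GraphClass) {V : Type} (F : SimpleGraph V) : Prop :=
  ∀ (m : ℕ) (f : Fin m → V), Function.Injective f → F.comap f ∈ Q m

theorem InQ.comap {Q : GraphClass} {V U : Type} {F : SimpleGraph V} (h : InQ Q F)
    (g : U → V) (hg : Function.Injective g) : InQ Q (F.comap g) := by
  intro m f hf
  exact h m (g ∘ f) (hg.comp hf)

theorem inQ_of_embed {Q : GraphClass} (hQ : IsHereditary Q) {V : Type} {n : ℕ}
    (G : SimpleGraph (Fin n)) (hG : G ∈ Q n) (F : SimpleGraph V) (φ : V → Fin n)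
    (hφ : Function.Injective φ) (h : ∀ u v, u ≠ v → (F.Adj u v ↔ G.Adj (φ u) (φ v))) :
    InQ Q F := by
  intro m f hf
  have : F.comap f = G.comap (φ ∘ f) := by
    ext a b
    simp only [SimpleGraph.comap_adj, Function.comp]
    by_cases hab : a = b
    · subst hab; simp
    · exact h _ _ (fun h => hab (hf h))
  rw [this]
  exact hereditary_inj hQ _ (hφ.comp hf) G hG

/-- Uniform measure on `[0,1]`. -/
noncomputable abbrev nuI : Measure ℝ := (volume : Measure ℝ).restrict (Icc (0:ℝ) 1)

instance nuI_prob : IsProbabilityMeasure nuI := ⟨by simp [nuI]⟩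

theorem integrable_of_bdd {α : Type*} [MeasurableSpace α] (μ : Measure α) [IsFiniteMeasure μ]
    {f : α → ℝ} (hf : Measurable f) (C : ℝ) (h : ∀ x, |f x| ≤ C) : Integrable f μ :=
  Integrable.of_bound hf.aestronglyMeasurable C (Eventually.of_forall (by simpa using h))

theorem extreme_set {α : Type*} [MeasurableSpace α] (μ : Measure α)
    {f h : α → ℝ} (hf : Measurable f) (hh : Measurable h) (hi : Integrable h μ)
    (h01 : ∀ x, f x ∈ Icc (0:ℝ) 1) :
    ∃ S, MeasurableSet S ∧ |∫ x, f x * h x ∂μ| ≤ |∫ x in S, h x ∂μ| := by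
  have hfi : Integrable (fun x => f x * h x) μ := by
    refine hi.bdd_mul (c := 1) hf.aestronglyMeasurable (Eventually.of_forall fun x => ?_)
    rw [Real.norm_eq_abs, abs_of_nonneg (h01 x).1]; exact (h01 x).2
  rcases le_total 0 (∫ x, f x * h x ∂μ) with h0 | h0
  · have hS : MeasurableSet {x | 0 < h x} := measurableSet_lt measurable_const hh
    refine ⟨_, hS, ?_⟩
    rw [abs_of_nonneg h0]
    refine le_trans ?_ (le_abs_self _)
    rw [← integral_indicator hS]
    refine integral_mono hfi (hi.indicator hS) fun x => ?_
    by_cases hx : 0 < h x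
    · simp [Set.indicator, hx]; nlinarith [(h01 x).2]
    · simp [Set.indicator, hx]; nlinarith [(h01 x).1]
  · have hS : MeasurableSet {x | h x < 0} := measurableSet_lt hh measurable_const
    refine ⟨_, hS, ?_⟩
    rw [abs_of_nonpos h0]
    refine le_trans (neg_le_neg ?_) (neg_le_abs _)
    rw [← integral_indicator hS]
    refine integral_mono (hi.indicator hS) hfi fun x => ?_
    by_cases hx : h x < 0
    · simp [Set.indicator, hx]; nlinarith [(h01 x).2]
    · simp [Set.indicator, hx]; nlinarith [(h01 x).1]

theorem cut_weighted {D : ℝ → ℝ → ℝ} (hD : Measurable (Function.uncurry D))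
    (hb : ∀ x y, |D x y| ≤ 1) {ε : ℝ}
    (hc : ∀ S T : Set ℝ, MeasurableSet S → MeasurableSet T → S ⊆ Icc 0 1 → T ⊆ Icc 0 1 →
      |∫ p in S ×ˢ T, D p.1 p.2| ≤ ε)
    {f g : ℝ → ℝ} (hf : Measurable f) (hg : Measurable g)
    (f01 : ∀ x, f x ∈ Icc (0:ℝ) 1) (g01 : ∀ x, g x ∈ Icc (0:ℝ) 1) :
    |∫ s, ∫ t, D s t * (f s * g t) ∂nuI ∂nuI| ≤ ε := by
  have hDg : Measurable (fun p : ℝ × ℝ => D p.1 p.2 * g p.2) := hD.mul (hg.comp measurable_snd)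
  have hDgb : ∀ x y, |D x y * g y| ≤ 1 := by
    intro x y
    rw [abs_mul, abs_of_nonneg (g01 y).1]
    nlinarith [hb x y, (g01 y).1, (g01 y).2, abs_nonneg (D x y)]
  have hhm : Measurable (fun s => ∫ t, D s t * g t ∂nuI) :=
    (hDg.stronglyMeasurable.integral_prod_right (ν := nuI)).measurable
  have hhb : ∀ s, |∫ t, D s t * g t ∂nuI| ≤ 1 := by
    intro s
    have := norm_integral_le_of_norm_le_const (μ := nuI) (f := fun t => D s t * g t) (C := 1)
      (Eventually.of_forall fun t => by simpa using hDgb s t)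
    simpa using this
  obtain ⟨S, hS, hSle⟩ := extreme_set nuI hf hhm (integrable_of_bdd _ hhm 1 hhb) f01
  have e1 : ∀ s, ∫ t, D s t * (f s * g t) ∂nuI = f s * ∫ t, D s t * g t ∂nuI := by
    intro s
    rw [← integral_const_mul]
    congr 1; ext t; ring
  simp_rw [e1]
  refine hSle.trans ?_
  have e2 : ∫ s in S, ∫ t, D s t * g t ∂nuI ∂nuI =
      ∫ t, ∫ s in S, D s t * g t ∂nuI ∂nuI := by
    refine integral_integral_swap ?_
    exact integrable_of_bdd _ hDg 1 fun p => hDgb p.1 p.2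
  have hD' : Measurable (fun p : ℝ × ℝ => D p.2 p.1) := hD.comp measurable_swap
  have hkm : Measurable (fun t => ∫ s in S, D s t ∂nuI) :=
    (hD'.stronglyMeasurable.integral_prod_right (ν := nuI.restrict S)).measurable
  have hkb : ∀ t, |∫ s in S, D s t ∂nuI| ≤ 1 := by
    intro t
    have := norm_integral_le_of_norm_le_const (μ := nuI.restrict S) (f := fun s => D s t) (C := 1)
      (Eventually.of_forall fun s => by simpa using hb s t)
    refine le_trans this ?_
    rw [one_mul]
    have h1 : (nuI.restrict S).real univ = nuI.real S := by simp [measureReal_def]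
    rw [h1]
    exact measureReal_le_one
  obtain ⟨T, hT, hTle⟩ := extreme_set nuI hg hkm (integrable_of_bdd _ hkm 1 hkb) g01
  have e3 : ∀ t, ∫ s in S, D s t * g t ∂nuI = g t * ∫ s in S, D s t ∂nuI := by
    intro t
    rw [← integral_const_mul]
    congr 1; ext t; ring
  rw [e2]
  simp_rw [e3]
  refine hTle.trans ?_
  have e4 : ∫ t in T, ∫ s in S, D s t ∂nuI ∂nuI =
      ∫ p in (S ∩ Icc 0 1) ×ˢ (T ∩ Icc 0 1), D p.1 p.2 := by
    rw [← integral_integral_swap]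
    · rw [Measure.volume_eq_prod, setIntegral_prod]
      · rw [nuI, Measure.restrict_restrict hS, Measure.restrict_restrict hT]
      · rw [IntegrableOn, ← Measure.prod_restrict, ← Measure.restrict_restrict hS,
          ← Measure.restrict_restrict hT]
        exact integrable_of_bdd _ hD 1 fun p => hb p.1 p.2
    · exact integrable_of_bdd _ hD 1 fun p => hb p.1 p.2
  rw [e4]
  exact hc _ _ (hS.inter measurableSet_Icc) (hT.inter measurableSet_Icc) inter_subset_right
    inter_subset_right

/-- Resampling one coordinate preserves a product probability measure. -/
theorem measurePreserving_update {V : Type} [Fintype V] [DecidableEq V] (ν : Measure ℝ)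
    [IsProbabilityMeasure ν] (u : V) :
    MeasurePreserving (fun p : ℝ × (V → ℝ) => Function.update p.2 u p.1)
      (ν.prod (Measure.pi fun _ : V => ν)) (Measure.pi fun _ : V => ν) := by
  have hm : Measurable (fun p : ℝ × (V → ℝ) => Function.update p.2 u p.1) := by
    rw [measurable_pi_iff]
    intro a
    by_cases h : a = u
    · subst h; simpa using measurable_fst
    · simp only [Function.update, h, dite_false]
      exact (measurable_pi_apply a).comp measurable_snd
  refine ⟨hm, ?_⟩
  symm
  refine Measure.pi_eq fun s hs => ?_
  rw [Measure.map_apply hm (MeasurableSet.univ_pi hs)]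
  have : (fun p : ℝ × (V → ℝ) => Function.update p.2 u p.1) ⁻¹' (univ.pi s) =
      s u ×ˢ (univ.pi (Function.update s u univ)) := by
    ext ⟨a, x⟩
    simp only [mem_preimage, Set.mem_pi, mem_univ, true_imp_iff, mem_prod]
    constructor
    · intro h
      refine ⟨by simpa using h u, fun i => ?_⟩
      by_cases hi : i = u
      · subst hi; simp
      · simpa [hi] using h i
    · rintro ⟨h1, h2⟩ i
      by_cases hi : i = u
      · subst hi; simpa using h1
      · simpa [hi] using h2 i
  rw [this, Measure.prod_prod, Measure.pi_pi, ← Finset.mul_prod_erase Finset.univ _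
    (Finset.mem_univ u), ← Finset.mul_prod_erase Finset.univ (fun i => ν (s i))
    (Finset.mem_univ u)]
  simp only [Function.update_self, measure_univ, one_mul]
  congr 1
  refine Finset.prod_congr rfl fun i hi => ?_
  rw [Function.update_of_ne (Finset.ne_of_mem_erase hi)]

/-- Uniform measure on `[0,1]^V`. -/
noncomputable abbrev muV (V : Type) [Fintype V] : Measure (V → ℝ) := Measure.pi fun _ : V => nuI

theorem integral_update {V : Type} [Fintype V] [DecidableEq V] {Φ : (V → ℝ) → ℝ}
    (hΦ : Measurable Φ) (hb : ∀ x, |Φ x| ≤ 1) (u : V) :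
    ∫ x, Φ x ∂muV V = ∫ x, ∫ s, Φ (Function.update x u s) ∂nuI ∂muV V := by
  have hmp : MeasurePreserving _ _ (muV V) := measurePreserving_update (V := V) nuI u
  have hcomp : Measurable (fun p : ℝ × (V → ℝ) => Φ (Function.update p.2 u p.1)) :=
    hΦ.comp hmp.measurable
  conv_lhs => rw [← hmp.map_eq]
  rw [integral_map hmp.measurable.aemeasurable hΦ.aestronglyMeasurable]
  rw [integral_prod_symm]
  exact integrable_of_bdd _ hcomp 1 fun p => hb _

theorem measurable_update_integral {V : Type} [Fintype V] [DecidableEq V] {Φ : (V → ℝ) → ℝ}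
    (hΦ : Measurable Φ) (u : V) :
    Measurable (fun x => ∫ s, Φ (Function.update x u s) ∂nuI) := by
  have hmp := measurePreserving_update (V := V) nuI u
  have hcomp : Measurable (fun p : (V → ℝ) × ℝ => Φ (Function.update p.1 u p.2)) :=
    (hΦ.comp hmp.measurable).comp measurable_swap
  exact (hcomp.stronglyMeasurable.integral_prod_right (ν := nuI)).measurable

theorem bdd_update_integral {V : Type} [Fintype V] [DecidableEq V] {Φ : (V → ℝ) → ℝ}
    (hb : ∀ x, |Φ x| ≤ 1) (u : V) (x : V → ℝ) :
    |∫ s, Φ (Function.update x u s) ∂nuI| ≤ 1 := by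
  have := norm_integral_le_of_norm_le_const (μ := nuI)
    (f := fun s => Φ (Function.update x u s)) (C := 1)
    (Eventually.of_forall fun t => by simpa using hb _)
  simpa using this

theorem measurable_ker {V : Type} {D : ℝ → ℝ → ℝ} (hD : Measurable (Function.uncurry D))
    (u v : V) : Measurable (fun x : V → ℝ => D (x u) (x v)) := by
  have h : Measurable (fun x : V → ℝ => (x u, x v)) :=
    Measurable.prodMk (measurable_pi_apply u) (measurable_pi_apply v)
  exact hD.comp h

theorem measurable_prod_ker {V : Type} [Fintype V] (P : Finset (V × V))
    {C : V × V → ℝ → ℝ → ℝ} (hC : ∀ q, Measurable (Function.uncurry (C q))) :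
    Measurable (fun x : V → ℝ => ∏ q ∈ P, C q (x q.1) (x q.2)) := by
  refine Finset.measurable_prod _ fun q _ => ?_
  exact measurable_ker (hC q) _ _

theorem prod_mem01 {ι : Type*} (P : Finset ι) {f : ι → ℝ} (h : ∀ i, f i ∈ Icc (0:ℝ) 1) :
    ∏ i ∈ P, f i ∈ Icc (0:ℝ) 1 :=
  ⟨Finset.prod_nonneg fun i _ => (h i).1, Finset.prod_le_one (fun i _ => (h i).1)
    fun i _ => (h i).2⟩

theorem single_step {V : Type} [Fintype V] [DecidableEq V] {D : ℝ → ℝ → ℝ}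
    (hD : Measurable (Function.uncurry D))
    (hb : ∀ x y, |D x y| ≤ 1) {ε : ℝ}
    (hc : ∀ S T : Set ℝ, MeasurableSet S → MeasurableSet T → S ⊆ Icc 0 1 → T ⊆ Icc 0 1 →
      |∫ p in S ×ˢ T, D p.1 p.2| ≤ ε)
    (u v : V) (huv : u ≠ v) (P : Finset (V × V)) (h1 : (u, v) ∉ P) (h2 : (v, u) ∉ P)
    {C : V × V → ℝ → ℝ → ℝ} (hC : ∀ q, Measurable (Function.uncurry (C q)))
    (h01 : ∀ q s t, C q s t ∈ Icc (0:ℝ) 1) :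
    |∫ x, D (x u) (x v) * ∏ q ∈ P, C q (x q.1) (x q.2) ∂muV V| ≤ ε := by
  have hm : Measurable (fun x : V → ℝ => D (x u) (x v) * ∏ q ∈ P, C q (x q.1) (x q.2)) :=
    (measurable_ker hD u v).mul (measurable_prod_ker P hC)
  have hbd : ∀ x : V → ℝ, |D (x u) (x v) * ∏ q ∈ P, C q (x q.1) (x q.2)| ≤ 1 := by
    intro x
    have := prod_mem01 P (f := fun q => C q (x q.1) (x q.2)) fun q => h01 _ _ _
    rw [abs_mul, abs_of_nonneg this.1]
    nlinarith [hb (x u) (x v), this.1, this.2, abs_nonneg (D (x u) (x v))]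
  rw [integral_update hm hbd v, integral_update (measurable_update_integral hm v)
    (bdd_update_integral hbd v) u]
  have key : ∀ x : V → ℝ, ‖∫ s, ∫ t,
      (fun x : V → ℝ => D (x u) (x v) * ∏ q ∈ P, C q (x q.1) (x q.2))
      (Function.update (Function.update x u s) v t) ∂nuI ∂nuI‖ ≤ ε := by
    intro x
    set f : ℝ → ℝ := fun s => ∏ q ∈ P.filter (fun q => q.1 = u ∨ q.2 = u),
      C q (Function.update x u s q.1) (Function.update x u s q.2) with hf
    set g : ℝ → ℝ := fun t => ∏ q ∈ P.filter (fun q => ¬ (q.1 = u ∨ q.2 = u)),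
      C q (Function.update x v t q.1) (Function.update x v t q.2) with hg
    have hfm : Measurable f := (measurable_prod_ker _ hC).comp (measurable_update x)
    have hgm : Measurable g := (measurable_prod_ker _ hC).comp (measurable_update x)
    have := cut_weighted hD hb hc hfm hgm (fun s => prod_mem01 _ fun q => h01 _ _ _)
      (fun s => prod_mem01 _ fun q => h01 _ _ _)
    rw [Real.norm_eq_abs]
    have hfg : ∀ s t, (fun x : V → ℝ => D (x u) (x v) * ∏ q ∈ P, C q (x q.1) (x q.2))
      (Function.update (Function.update x u s) v t) = D s t * (f s * g t) := by
      intro s t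
      simp only [Function.update_self, Function.update_of_ne huv]
      congr 1
      rw [← Finset.prod_filter_mul_prod_filter_not P (fun q => q.1 = u ∨ q.2 = u)]
      congr 1
      · refine Finset.prod_congr rfl fun q hq => ?_
        obtain ⟨hqP, hq'⟩ := Finset.mem_filter.1 hq
        have ha : q.1 ≠ v ∧ q.2 ≠ v := by
          obtain ⟨a, b⟩ := q
          simp only at hq' ⊢
          constructor
          · rintro rfl
            rcases hq' with rfl | rfl
            · exact huv rfl
            · exact h2 hqP
          · rintro rfl
            rcases hq' with rfl | rfl
            · exact h1 hqP
            · exact huv rfl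
        rw [Function.update_of_ne ha.1, Function.update_of_ne ha.2]
      · refine Finset.prod_congr rfl fun q hq => ?_
        obtain ⟨hqP, hq'⟩ := Finset.mem_filter.1 hq
        push Not at hq'
        rw [Function.update_comm huv, Function.update_of_ne hq'.1, Function.update_of_ne hq'.2]
    simp_rw [hfg]
    exact this
  have := norm_integral_le_of_norm_le_const (μ := muV V) (Eventually.of_forall key)
  simpa using this

theorem counting {V : Type} [Fintype V] [DecidableEq V] (P : Finset (V × V))
    (hne : ∀ q ∈ P, q.1 ≠ q.2) (has : ∀ q ∈ P, (q.2, q.1) ∉ P)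
    {A B : V × V → ℝ → ℝ → ℝ} (hA : ∀ q, Measurable (Function.uncurry (A q)))
    (hB : ∀ q, Measurable (Function.uncurry (B q)))
    (A01 : ∀ q s t, A q s t ∈ Icc (0:ℝ) 1) (B01 : ∀ q s t, B q s t ∈ Icc (0:ℝ) 1) {ε : ℝ}
    (hc : ∀ q, ∀ S T : Set ℝ, MeasurableSet S → MeasurableSet T → S ⊆ Icc 0 1 → T ⊆ Icc 0 1 →
      |∫ p in S ×ˢ T, (A q p.1 p.2 - B q p.1 p.2)| ≤ ε) :
    |∫ x, ∏ q ∈ P, A q (x q.1) (x q.2) ∂muV V - ∫ x, ∏ q ∈ P, B q (x q.1) (x q.2) ∂muV V|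
      ≤ P.card * ε := by
  classical
  set M : Finset (V × V) → V × V → ℝ → ℝ → ℝ := fun R q => if q ∈ R then A q else B q with hM
  have hMm : ∀ R q, Measurable (Function.uncurry (M R q)) := by
    intro R q
    simp only [hM]
    split_ifs
    · exact hA q
    · exact hB q
  have M01 : ∀ R q s t, M R q s t ∈ Icc (0:ℝ) 1 := by
    intro R q s t
    simp only [hM]
    split_ifs
    · exact A01 q s t
    · exact B01 q s t
  have main : ∀ R ⊆ P, |∫ x, ∏ q ∈ P, M R q (x q.1) (x q.2) ∂muV V -
      ∫ x, ∏ q ∈ P, B q (x q.1) (x q.2) ∂muV V| ≤ R.card * ε := by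
    intro R
    induction R using Finset.induction_on with
    | empty => intro _; simp [hM]
    | insert p R hp ih =>
      intro hsub
      have hR : R ⊆ P := fun x hx => hsub (Finset.mem_insert_of_mem hx)
      have hpP : p ∈ P := hsub (Finset.mem_insert_self _ _)
      have hInteg : ∀ R', Integrable (fun x : V → ℝ => ∏ q ∈ P, M R' q (x q.1) (x q.2)) (muV V) := by
        intro R'
        refine integrable_of_bdd _ (measurable_prod_ker P (hMm R')) 1 fun x => ?_
        have := prod_mem01 P (f := fun q => M R' q (x q.1) (x q.2)) fun q => M01 _ _ _ _
        rw [abs_of_nonneg this.1]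
        exact this.2
      have hdiff : ∫ x, ∏ q ∈ P, M (insert p R) q (x q.1) (x q.2) ∂muV V -
          ∫ x, ∏ q ∈ P, M R q (x q.1) (x q.2) ∂muV V =
          ∫ x, (fun s t => A p s t - B p s t) (x p.1) (x p.2) *
            ∏ q ∈ P.erase p, M R q (x q.1) (x q.2) ∂muV V := by
        rw [← integral_sub (hInteg _) (hInteg _)]
        congr 1
        ext x
        rw [← Finset.mul_prod_erase P _ hpP, ← Finset.mul_prod_erase P (fun q => M R q (x q.1) (x q.2)) hpP]
        have e : ∏ q ∈ P.erase p, M (insert p R) q (x q.1) (x q.2) =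
            ∏ q ∈ P.erase p, M R q (x q.1) (x q.2) := by
          refine Finset.prod_congr rfl fun q hq => ?_
          simp [hM, Finset.ne_of_mem_erase hq]
        rw [e]
        have e1 : M (insert p R) p = A p := by simp [hM]
        have e2 : M R p = B p := by simp [hM, hp]
        rw [e1, e2]
        ring
      have hstep : |∫ x, (fun s t => A p s t - B p s t) (x p.1) (x p.2) *
            ∏ q ∈ P.erase p, M R q (x q.1) (x q.2) ∂muV V| ≤ ε := by
        refine single_step (D := fun s t => A p s t - B p s t) ((hA p).sub (hB p)) ?_ (hc p) p.1 p.2 (hne p hpP) _ ?_ ?_ (hMm R) (M01 R)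
        · intro s t
          have a := A01 p s t
          have b := B01 p s t
          rw [abs_le]
          constructor <;> linarith [a.1, a.2, b.1, b.2]
        · simp
        · intro h
          exact has p hpP (Finset.mem_of_mem_erase h)
      rw [← hdiff] at hstep
      have := ih hR
      rw [Finset.card_insert_of_notMem hp]
      push_cast
      rw [abs_le] at *
      constructor <;> linarith [this.1, this.2, hstep.1, hstep.2]
  have := main P subset_rfl
  convert this using 5 with x
  refine Finset.prod_congr rfl fun q hq => ?_
  simp [hM, hq]

theorem muV_eq (V : Type) [Fintype V] :
    muV V = (volume : Measure (V → ℝ)).restrict (univ.pi fun _ : V => Icc (0:ℝ) 1) := by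
  rw [volume_pi, Measure.restrict_pi_pi]

theorem isGraphon_graphonOfGraph {n : ℕ} (G : SimpleGraph (Fin n)) :
    IsGraphon (graphonOfGraph G) := by
  classical
  refine ⟨?_, ?_, ?_⟩
  · intro x y
    unfold graphonOfGraph
    congr 1
    rw [eq_iff_iff]
    constructor
    · rintro ⟨i, j, h, h1, h2⟩
      exact ⟨j, i, h.symm, h2, h1⟩
    · rintro ⟨i, j, h, h1, h2⟩
      exact ⟨j, i, h.symm, h2, h1⟩
  · have hset : MeasurableSet {p : ℝ × ℝ | ∃ i j : Fin n, G.Adj i j ∧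
        ⌈(n : ℝ) * p.1⌉ = ((i : ℕ) : ℤ) + 1 ∧ ⌈(n : ℝ) * p.2⌉ = ((j : ℕ) : ℤ) + 1} := by
      simp only [ofPred_exists]
      refine MeasurableSet.iUnion fun i => MeasurableSet.iUnion fun j => ?_
      refine (MeasurableSet.const _).inter (MeasurableSet.inter ?_ ?_)
      · have : Measurable (fun p : ℝ × ℝ => ⌈(n : ℝ) * p.1⌉) :=
          Int.measurable_ceil.comp (measurable_const.mul measurable_fst)
        exact this (measurableSet_singleton _)
      · have : Measurable (fun p : ℝ × ℝ => ⌈(n : ℝ) * p.2⌉) :=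
          Int.measurable_ceil.comp (measurable_const.mul measurable_snd)
        exact this (measurableSet_singleton _)
    unfold graphonOfGraph Function.uncurry
    exact Measurable.ite hset measurable_const measurable_const
  · intro x y
    unfold graphonOfGraph
    split_ifs <;> simp

theorem le_cutNorm {D : ℝ → ℝ → ℝ} (hb : ∀ x y, |D x y| ≤ 1) {S T : Set ℝ}
    (hS : MeasurableSet S) (hT : MeasurableSet T) (hS1 : S ⊆ Icc 0 1) (hT1 : T ⊆ Icc 0 1) :
    |∫ p in S ×ˢ T, D p.1 p.2| ≤ cutNorm D := by
  refine le_csSup ⟨1, ?_⟩ ⟨S, T, hS, hT, hS1, hT1, rfl⟩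
  rintro _ ⟨S, T, hS, hT, hS1, hT1, rfl⟩
  have hvol : volume (S ×ˢ T) ≤ 1 := by
    refine (measure_mono (prod_mono hS1 hT1)).trans ?_
    rw [Measure.volume_eq_prod, Measure.prod_prod]
    simp
  have := norm_setIntegral_le_of_norm_le_const (μ := volume) (s := S ×ˢ T)
    (f := fun p : ℝ × ℝ => D p.1 p.2) (C := 1) (lt_of_le_of_lt hvol ENNReal.one_lt_top)
    (fun p _ => by simpa using hb p.1 p.2)
  rw [Real.norm_eq_abs, one_mul] at this
  refine this.trans ?_
  rw [measureReal_def]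
  exact ENNReal.toReal_le_of_le_ofReal zero_le_one (by simpa using hvol)

theorem isMPSelf_id : IsMPSelf id :=
  ⟨MeasurePreserving.id _, mapsTo_id _⟩

theorem exists_sigma {W₁ W₂ : ℝ → ℝ → ℝ} {ε : ℝ} (h : deltaCut W₁ W₂ < ε) :
    ∃ σ₁ σ₂ : ℝ → ℝ, IsMPSelf σ₁ ∧ IsMPSelf σ₂ ∧
      cutNorm (fun x y => W₁ (σ₁ x) (σ₁ y) - W₂ (σ₂ x) (σ₂ y)) < ε := by
  unfold deltaCut at h
  obtain ⟨_, ⟨σ₁, σ₂, h1, h2, rfl⟩, hlt⟩ := exists_lt_of_csInf_lt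
    (by exact ⟨_, id, id, isMPSelf_id, isMPSelf_id, rfl⟩) h
  exact ⟨σ₁, σ₂, h1, h2, hlt⟩

open Classical in
/-- The factor of a pair in the induced density. -/
noncomputable def kerF {V : Type} (F : SimpleGraph V) (W : ℝ → ℝ → ℝ) (q : V × V) : ℝ → ℝ → ℝ :=
  fun s t => if F.Adj q.1 q.2 then W s t else 1 - W s t

theorem kerF_measurable {V : Type} (F : SimpleGraph V) {W : ℝ → ℝ → ℝ}
    (hW : Measurable (Function.uncurry W)) (q : V × V) :
    Measurable (Function.uncurry (kerF F W q)) := by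
  by_cases h : F.Adj q.1 q.2
  · have : kerF F W q = W := by
      funext s t
      simp [kerF, h]
    rwa [this]
  · have : kerF F W q = fun s t => 1 - W s t := by
      funext s t
      simp [kerF, h]
    rw [this]
    exact measurable_const.sub hW

theorem kerF_mem {V : Type} (F : SimpleGraph V) {W : ℝ → ℝ → ℝ}
    (hW : ∀ x y, W x y ∈ Icc (0:ℝ) 1) (q : V × V) (s t : ℝ) :
    kerF F W q s t ∈ Icc (0:ℝ) 1 := by
  have := hW s t
  unfold kerF
  split_ifs
  · exact this
  · exact ⟨by linarith [this.2], by linarith [this.1]⟩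

theorem integral_invariant {V : Type} [Fintype V] (P : Finset (V × V)) (F : SimpleGraph V)
    {W : ℝ → ℝ → ℝ} (hW : Measurable (Function.uncurry W)) {σ : ℝ → ℝ} (hσ : IsMPSelf σ) :
    ∫ x, ∏ q ∈ P, kerF F (fun s t => W (σ s) (σ t)) q (x q.1) (x q.2) ∂muV V =
      ∫ x, ∏ q ∈ P, kerF F W q (x q.1) (x q.2) ∂muV V := by
  have hmp : MeasurePreserving (fun (x : V → ℝ) i => σ (x i)) (muV V) (muV V) :=
    measurePreserving_pi _ _ fun _ => hσ.1
  conv_rhs => rw [← hmp.map_eq]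
  rw [integral_map hmp.measurable.aemeasurable
    (measurable_prod_ker P (kerF_measurable F hW)).aestronglyMeasurable]
  rfl

theorem measurableSet_near (V : Type) [Fintype V] (n : ℕ) :
    MeasurableSet {x : V → ℝ | ∃ u v : V, u ≠ v ∧ (n:ℝ) * |x u - x v| < 1} := by
  simp only [ofPred_exists]
  refine MeasurableSet.iUnion fun u => MeasurableSet.iUnion fun v => ?_
  refine (MeasurableSet.const _).inter ?_
  have h : Measurable (fun x : V → ℝ => (n:ℝ) * |x u - x v|) := by fun_prop
  exact measurableSet_lt h measurable_const

theorem diag_small (V : Type) [Fintype V] :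
    Tendsto (fun n : ℕ => muV V {x | ∃ u v : V, u ≠ v ∧ (n:ℝ) * |x u - x v| < 1}) atTop
      (nhds 0) := by
  classical
  set s : ℕ → Set (V → ℝ) := fun n => {x | ∃ u v : V, u ≠ v ∧ (n:ℝ) * |x u - x v| < 1} with hs
  have hmeas : ∀ n, MeasurableSet (s n) := by
    intro n
    exact measurableSet_near V n
  have hanti : Antitone s := by
    rintro m n hmn x ⟨u, v, huv, h⟩
    refine ⟨u, v, huv, lt_of_le_of_lt ?_ h⟩
    gcongr
  have hlim := tendsto_measure_iInter_atTop (μ := muV V) (fun n => (hmeas n).nullMeasurableSet)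
    hanti ⟨0, measure_ne_top _ _⟩
  have hz : muV V (⋂ n, s n) = 0 := by
    have hsub : (⋂ n, s n) ⊆ ⋃ u : V, ⋃ v : V, ⋃ _ : u ≠ v, {x : V → ℝ | x u = x v} := by
      intro x hx
      by_contra hcon
      simp only [mem_iUnion, mem_ofPred_eq, not_exists] at hcon
      have hpos : ∀ u v, u ≠ v → 0 < |x u - x v| := fun u v huv =>
        abs_pos.2 (sub_ne_zero.2 (hcon u v huv))
      have hex : ∃ n : ℕ, ∀ u v, u ≠ v → 1 ≤ (n:ℝ) * |x u - x v| := by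
        have : ∀ q : V × V, ∃ n : ℕ, q.1 ≠ q.2 → 1 ≤ (n:ℝ) * |x q.1 - x q.2| := by
          intro q
          by_cases hq : q.1 = q.2
          · exact ⟨0, fun h => absurd hq h⟩
          · obtain ⟨n, hn⟩ := exists_nat_ge (1 / |x q.1 - x q.2|)
            refine ⟨n, fun _ => ?_⟩
            rwa [div_le_iff₀ (hpos _ _ hq)] at hn
        choose N hN using this
        refine ⟨Finset.univ.sup N, fun u v huv => (hN (u, v) huv).trans ?_⟩
        have : N (u, v) ≤ Finset.univ.sup N := Finset.le_sup (Finset.mem_univ _)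
        gcongr
      obtain ⟨n, hn⟩ := hex
      obtain ⟨u, v, huv, h⟩ := mem_iInter.1 hx n
      exact absurd h (not_lt.2 (hn u v huv))
    refine measure_mono_null hsub ?_
    refine measure_iUnion_null fun u => measure_iUnion_null fun v => measure_iUnion_null fun huv => ?_
    rw [muV_eq]
    refine le_antisymm ((Measure.restrict_apply_le _ _).trans ?_) zero_le
    have hker : {x : V → ℝ | x u = x v} =
        ((LinearMap.ker ((LinearMap.proj u : (V → ℝ) →ₗ[ℝ] ℝ) - LinearMap.proj v) :
          Submodule ℝ (V → ℝ)) : Set (V → ℝ)) := by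
      ext x
      simp [sub_eq_zero]
    rw [hker, Measure.addHaar_submodule]
    rw [Ne, LinearMap.ker_eq_top]
    intro h
    have := LinearMap.congr_fun h (Pi.single u 1)
    simp [huv.symm] at this
  rw [hz] at hlim
  exact hlim

theorem inQ_of_density_pos {Q : GraphClass} (hQ : IsHereditary Q) {W : ℝ → ℝ → ℝ}
    (hWQ : W ∈ limitSet Q) {V : Type} [Fintype V] [DecidableEq V] (P : Finset (V × V))
    (hne : ∀ q ∈ P, q.1 ≠ q.2) (has : ∀ q ∈ P, (q.2, q.1) ∉ P)
    (htot : ∀ u v, u ≠ v → (u, v) ∈ P ∨ (v, u) ∈ P) (F : SimpleGraph V)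
    (hpos : 0 < ∫ x, ∏ q ∈ P, kerF F W q (x q.1) (x q.2) ∂muV V) : InQ Q F := by
  classical
  obtain ⟨hW, nk, Gk, hGQ, hnk, hlim⟩ := hWQ
  set δ := ∫ x, ∏ q ∈ P, kerF F W q (x q.1) (x q.2) ∂muV V with hδ
  set ε := δ / (2 * (P.card + 1)) with hε
  have hεpos : 0 < ε := by positivity
  have ev1 : ∀ᶠ k in atTop, deltaCut (graphonOfGraph (Gk k)) W < ε :=
    hlim.eventually (gt_mem_nhds hεpos)
  have ev2 : ∀ᶠ k in atTop, muV V {x | ∃ u v : V, u ≠ v ∧ (nk k:ℝ) * |x u - x v| < 1} <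
      ENNReal.ofReal (δ / 2) :=
    ((diag_small V).comp hnk).eventually (gt_mem_nhds (by simpa using hpos))
  have ev3 : ∀ᶠ k in atTop, 1 ≤ nk k := hnk.eventually_ge_atTop 1
  obtain ⟨k, hk1, hk2, hk3⟩ := (ev1.and (ev2.and ev3)).exists
  set n := nk k with hn
  set G := Gk k with hG
  have hU := isGraphon_graphonOfGraph G
  obtain ⟨σ₁, σ₂, hσ₁, hσ₂, hcut⟩ := exists_sigma hk1
  set U₁ : ℝ → ℝ → ℝ := fun x y => graphonOfGraph G (σ₁ x) (σ₁ y) with hU₁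
  set U₂ : ℝ → ℝ → ℝ := fun x y => W (σ₂ x) (σ₂ y) with hU₂
  have m1 : Measurable (Function.uncurry U₁) :=
    hU.2.1.comp ((hσ₁.1.measurable.comp measurable_fst).prodMk
      (hσ₁.1.measurable.comp measurable_snd))
  have m2 : Measurable (Function.uncurry U₂) :=
    hW.2.1.comp ((hσ₂.1.measurable.comp measurable_fst).prodMk
      (hσ₂.1.measurable.comp measurable_snd))
  have b1 : ∀ x y, U₁ x y ∈ Icc (0:ℝ) 1 := fun x y => hU.2.2 _ _
  have b2 : ∀ x y, U₂ x y ∈ Icc (0:ℝ) 1 := fun x y => hW.2.2 _ _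
  have hb : ∀ x y, |U₁ x y - U₂ x y| ≤ 1 := by
    intro x y
    have := b1 x y
    have := b2 x y
    rw [abs_le]
    constructor <;> linarith [(b1 x y).1, (b1 x y).2, (b2 x y).1, (b2 x y).2]
  have hcount := counting P hne has (kerF_measurable F m1) (kerF_measurable F m2)
    (kerF_mem F b1) (kerF_mem F b2) (ε := ε) (by
      intro q S T hS hT hS1 hT1
      have := (le_cutNorm hb hS hT hS1 hT1).trans hcut.le
      by_cases hq : F.Adj q.1 q.2
      · simpa [kerF, hq] using this
      · rw [← abs_neg, ← integral_neg]
        simpa [kerF, hq] using this)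
  rw [integral_invariant P F hU.2.1 hσ₁, integral_invariant P F hW.2.1 hσ₂, ← hδ] at hcount
  have hge : δ / 2 < ∫ x, ∏ q ∈ P, kerF F (graphonOfGraph G) q (x q.1) (x q.2) ∂muV V := by
    have h1 : P.card * ε < δ / 2 := by
      rw [hε, mul_div_assoc', div_lt_div_iff₀ (by positivity) (by positivity)]
      nlinarith
    have := (abs_le.1 hcount).1
    linarith
  -- find a good point
  obtain ⟨x, hx01, hxsep, hxpos⟩ : ∃ x : V → ℝ, (∀ v, x v ∈ Ioc (0:ℝ) 1) ∧
      (∀ u v, u ≠ v → 1 ≤ (n:ℝ) * |x u - x v|) ∧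
      ∏ q ∈ P, kerF F (graphonOfGraph G) q (x q.1) (x q.2) ≠ 0 := by
    by_contra hcon
    push Not at hcon
    set B : Set (V → ℝ) := {x | ∃ u v : V, u ≠ v ∧ (n:ℝ) * |x u - x v| < 1} with hB
    have hBm : MeasurableSet B := by
      exact measurableSet_near V n
    have hae : ∀ᵐ x ∂muV V, ∀ v, x v ∈ Ioc (0:ℝ) 1 := by
      rw [ae_all_iff]
      intro v
      have hmp : MeasurePreserving (Function.eval v) (muV V) nuI :=
        measurePreserving_eval (fun _ : V => nuI) v
      have h0 : ∀ᵐ s ∂nuI, s ∈ Ioc (0:ℝ) 1 := by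
        rw [nuI, ← Measure.restrict_congr_set Ioc_ae_eq_Icc]
        exact ae_restrict_mem measurableSet_Ioc
      exact hmp.quasiMeasurePreserving.ae h0
    have hle : ∫ x, ∏ q ∈ P, kerF F (graphonOfGraph G) q (x q.1) (x q.2) ∂muV V ≤
        ∫ x, B.indicator (fun _ => (1:ℝ)) x ∂muV V := by
      refine integral_mono_ae ?_ ?_ ?_
      · refine integrable_of_bdd _ (measurable_prod_ker P (kerF_measurable F hU.2.1)) 1 fun x => ?_
        have := prod_mem01 P (f := fun q => kerF F (graphonOfGraph G) q (x q.1) (x q.2))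
          fun q => kerF_mem F hU.2.2 _ _ _
        rw [abs_of_nonneg this.1]
        exact this.2
      · exact (integrable_const (1:ℝ)).indicator hBm
      · filter_upwards [hae] with x hx
        by_cases hxB : x ∈ B
        · rw [indicator_of_mem hxB]
          exact (prod_mem01 P (f := fun q => kerF F (graphonOfGraph G) q (x q.1) (x q.2))
            fun q => kerF_mem F hU.2.2 _ _ _).2
        · rw [indicator_of_notMem hxB]
          refine (hcon x hx fun u v huv => ?_).le
          by_contra hlt
          exact hxB ⟨u, v, huv, not_le.1 hlt⟩
    rw [integral_indicator_const _ hBm, smul_eq_mul, mul_one, measureReal_def] at hle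
    have : (muV V B).toReal < δ / 2 := by
      rw [← ENNReal.lt_ofReal_iff_toReal_lt (measure_ne_top _ _)]
      exact hk2
    linarith
  have hnpos : (0:ℝ) < n := by exact_mod_cast hk3
  have hceil : ∀ v, ∃ i : Fin n, ⌈(n:ℝ) * x v⌉ = ((i:ℕ):ℤ) + 1 := by
    intro v
    have h1 : 0 < ⌈(n:ℝ) * x v⌉ := Int.ceil_pos.2 (mul_pos hnpos (hx01 v).1)
    have h2 : ⌈(n:ℝ) * x v⌉ ≤ n := by
      rw [Int.ceil_le]
      push_cast
      nlinarith [(hx01 v).2]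
    refine ⟨⟨(⌈(n:ℝ) * x v⌉ - 1).toNat, by omega⟩, ?_⟩
    simp only
    omega
  choose φ hφ using hceil
  have hφinj : Function.Injective φ := by
    intro u v huv
    by_contra hne'
    have h1 := hφ u
    rw [huv, ← hφ v] at h1
    have hs := hxsep u v hne'
    have a1 := Int.le_ceil ((n:ℝ) * x u)
    have a2 := Int.ceil_lt_add_one ((n:ℝ) * x u)
    have a3 := Int.le_ceil ((n:ℝ) * x v)
    have a4 := Int.ceil_lt_add_one ((n:ℝ) * x v)
    rw [h1] at a1 a2
    have : (n:ℝ) * |x u - x v| < 1 := by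
      rw [← abs_of_pos hnpos, ← abs_mul, abs_lt]
      constructor <;> linarith
    linarith
  have hGadj : ∀ u v, graphonOfGraph G (x u) (x v) = if G.Adj (φ u) (φ v) then 1 else 0 := by
    intro u v
    unfold graphonOfGraph
    congr 1
    rw [eq_iff_iff]
    constructor
    · rintro ⟨i, j, hij, hi, hj⟩
      have e1 : φ u = i := by
        have := (hφ u).symm.trans hi
        ext; omega
      have e2 : φ v = j := by
        have := (hφ v).symm.trans hj
        ext; omega
      rwa [e1, e2]
    · intro h
      exact ⟨_, _, h, hφ u, hφ v⟩
  have hP : ∀ u v, (u, v) ∈ P → (F.Adj u v ↔ G.Adj (φ u) (φ v)) := by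
    intro u v huv
    have := Finset.prod_ne_zero_iff.1 hxpos (u, v) huv
    simp only [kerF, hGadj] at this
    by_cases h1 : F.Adj u v <;> by_cases h2 : G.Adj (φ u) (φ v) <;> simp_all
  refine inQ_of_embed hQ G (hGQ k) F φ hφinj fun u v huv => ?_
  rcases htot u v huv with h | h
  · exact hP u v h
  · rw [F.adj_comm, G.adj_comm]
    exact hP v u h

theorem pi_smul_restrict {V : Type} [Fintype V] (k : ENNReal) (hk : k ≠ ⊤)
    (B : V → Set ℝ) :
    (Measure.pi fun v => k • (volume : Measure ℝ).restrict (B v)) =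
      k ^ Fintype.card V • (volume : Measure (V → ℝ)).restrict (univ.pi B) := by
  lift k to NNReal using hk
  have hsf : ∀ v, SigmaFinite ((k : ENNReal) • (volume : Measure ℝ).restrict (B v)) := by
    intro v
    have : SigmaFinite (k • (volume : Measure ℝ).restrict (B v)) := inferInstance
    exact this
  refine Measure.pi_eq fun s hs => ?_
  rw [volume_pi, Measure.restrict_pi_pi, Measure.smul_apply, Measure.pi_pi]
  simp only [Measure.smul_apply, smul_eq_mul, Finset.prod_mul_distrib, Finset.prod_const,
    Finset.card_univ]

theorem measurePreserving_select {r M : ℕ} (ν : Fin r → Measure ℝ)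
    [∀ i, IsProbabilityMeasure (ν i)] (φ : Fin r → Fin M) :
    MeasurePreserving (fun (x : Fin r × Fin M → ℝ) (i : Fin r) => x (i, φ i))
      (Measure.pi fun q : Fin r × Fin M => ν q.1) (Measure.pi ν) := by
  have hm : Measurable (fun (x : Fin r × Fin M → ℝ) (i : Fin r) => x (i, φ i)) := by fun_prop
  refine ⟨hm, ?_⟩
  symm
  refine Measure.pi_eq fun s hs => ?_
  rw [Measure.map_apply hm (MeasurableSet.univ_pi hs)]
  have : (fun (x : Fin r × Fin M → ℝ) (i : Fin r) => x (i, φ i)) ⁻¹' (univ.pi s) =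
      univ.pi (fun q : Fin r × Fin M => if q.2 = φ q.1 then s q.1 else univ) := by
    ext x
    simp only [mem_preimage, Set.mem_pi, mem_univ, true_imp_iff]
    constructor
    · rintro h ⟨i, a⟩
      by_cases ha : a = φ i
      · subst ha; simpa using h i
      · simp [ha]
    · intro h i
      simpa using h (i, φ i)
  rw [this, Measure.pi_pi, Fintype.prod_prod_type]
  refine Finset.prod_congr rfl fun i _ => ?_
  rw [Finset.prod_eq_single (φ i)]
  · simp
  · intro a _ ha
    simp [ha]
  · simp

theorem blowup {r : ℕ} (M : ℕ) {E : Set (Fin r → ℝ)} (hE : MeasurableSet E)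
    (hpos : volume E ≠ 0) :
    volume {x : Fin r × Fin M → ℝ | ∀ φ : Fin r → Fin M, (fun i => x (i, φ i)) ∈ E} ≠ 0 := by
  classical
  have hdens := Besicovitch.ae_tendsto_measure_inter_div (volume : Measure (Fin r → ℝ)) E
  have hne : NeBot (ae ((volume : Measure (Fin r → ℝ)).restrict E)) := by
    rw [ae_neBot]
    simpa using hpos
  obtain ⟨c, hc⟩ := hdens.exists
  set m : ℕ := Fintype.card (Fin r → Fin M) with hm
  set ε : ENNReal := ((m : ENNReal) + 1)⁻¹ with hε
  have hε1 : (1 : ENNReal) - ε < 1 := by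
    refine ENNReal.sub_lt_self ENNReal.one_ne_top one_ne_zero ?_
    simp [hε]
  have ev := (hc.eventually (lt_mem_nhds hε1)).and self_mem_nhdsWithin
  obtain ⟨ρ, hρ1, hρ0⟩ := ev.exists
  have hρ : 0 < ρ := hρ0
  set k : ENNReal := (ENNReal.ofReal (2 * ρ))⁻¹ with hk
  have hkne : ENNReal.ofReal (2 * ρ) ≠ 0 := by
    rw [Ne, ENNReal.ofReal_eq_zero]; linarith
  have hk_top : k ≠ ⊤ := by simp [hk, hρ]
  set ν : Fin r → Measure ℝ := fun i => k • volume.restrict (Metric.closedBall (c i) ρ) with hν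
  have hνp : ∀ i, IsProbabilityMeasure (ν i) := by
    intro i
    constructor
    simp only [hν, Measure.smul_apply, Measure.restrict_apply MeasurableSet.univ, univ_inter,
      Real.volume_closedBall, smul_eq_mul, hk]
    exact ENNReal.inv_mul_cancel hkne ENNReal.ofReal_ne_top
  have hball : Metric.closedBall c ρ = univ.pi fun i => Metric.closedBall (c i) ρ :=
    closedBall_pi c hρ.le
  have hPr : Measure.pi ν = k ^ r • (volume : Measure (Fin r → ℝ)).restrict (Metric.closedBall c ρ) := by
    rw [hball, hν, pi_smul_restrict k hk_top]
    simp
  have hvolB : volume (Metric.closedBall c ρ) = (k ^ r)⁻¹ := by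
    rw [hball, volume_pi, Measure.pi_pi]
    simp only [Real.volume_closedBall, Finset.prod_const, Finset.card_univ, Fintype.card_fin, hk]
    rw [← ENNReal.inv_pow, inv_inv]
  have hPE : 1 - ε < Measure.pi ν E := by
    rw [hPr, Measure.smul_apply, Measure.restrict_apply hE, smul_eq_mul]
    rwa [hvolB, div_eq_mul_inv, inv_inv, mul_comm] at hρ1
  have hPEc : Measure.pi ν Eᶜ ≤ ε := by
    rw [prob_compl_eq_one_sub hE]
    exact tsub_le_iff_tsub_le.1 hPE.le
  set PV := Measure.pi fun q : Fin r × Fin M => ν q.1 with hPV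
  set Z := {x : Fin r × Fin M → ℝ | ∀ φ : Fin r → Fin M, (fun i => x (i, φ i)) ∈ E} with hZ
  have hZc : PV Zᶜ < 1 := by
    have hsub : Zᶜ ⊆ ⋃ φ : Fin r → Fin M,
        (fun (x : Fin r × Fin M → ℝ) (i : Fin r) => x (i, φ i)) ⁻¹' Eᶜ := by
      intro x hx
      simp only [hZ, mem_compl_iff, mem_ofPred_eq, not_forall] at hx
      simpa using hx
    calc PV Zᶜ ≤ ∑ φ : Fin r → Fin M,
          PV ((fun (x : Fin r × Fin M → ℝ) (i : Fin r) => x (i, φ i)) ⁻¹' Eᶜ) :=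
          (measure_mono hsub).trans (measure_iUnion_fintype_le _ _)
      _ ≤ ∑ φ : Fin r → Fin M, ε := by
          refine Finset.sum_le_sum fun φ _ => ?_
          rw [(measurePreserving_select ν φ).measure_preimage hE.compl.nullMeasurableSet]
          exact hPEc
      _ = m * ((m : ENNReal) + 1)⁻¹ := by
          rw [Finset.sum_const, Finset.card_univ, nsmul_eq_mul]
      _ < 1 := by
          rw [← div_eq_mul_inv]
          refine (ENNReal.div_lt_iff (Or.inl (by simp)) (Or.inl (by finiteness))).2 ?_
          rw [one_mul]
          exact ENNReal.lt_add_right (ENNReal.natCast_ne_top _) one_ne_zero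
  intro h0
  have hPVe : PV = k ^ Fintype.card (Fin r × Fin M) • (volume : Measure (Fin r × Fin M → ℝ)).restrict
      (univ.pi fun q => Metric.closedBall (c q.1) ρ) := by
    rw [hPV, hν, pi_smul_restrict k hk_top]
  have hPZ : PV Z = 0 := by
    rw [hPVe, Measure.smul_apply]
    have := le_antisymm ((Measure.restrict_apply_le (μ := volume)
      (univ.pi fun q : Fin r × Fin M => Metric.closedBall (c q.1) ρ) Z).trans h0.le) zero_le
    rw [this]; simp
  have h1 : (1 : ENNReal) ≤ PV Z + PV Zᶜ := by
    have := measure_union_le (μ := PV) Z Zᶜ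
    rwa [union_compl_self, measure_univ] at this
  rw [hPZ, zero_add] at h1
  exact absurd hZc (not_lt.2 h1)

theorem volume_rand_ne_zero {W : ℝ → ℝ → ℝ} (hW : IsGraphon W) {r : ℕ}
    (h : ¬ KFree r (randIndicator W)) :
    MeasurableSet ((univ.pi fun _ : Fin r => Icc (0:ℝ) 1) ∩
        {x : Fin r → ℝ | ∀ i j, i ≠ j → 0 < W (x i) (x j) ∧ W (x i) (x j) < 1}) ∧
      volume ((univ.pi fun _ : Fin r => Icc (0:ℝ) 1) ∩
        {x : Fin r → ℝ | ∀ i j, i ≠ j → 0 < W (x i) (x j) ∧ W (x i) (x j) < 1}) ≠ 0 := by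
  have hB : MeasurableSet (univ.pi fun _ : Fin r => Icc (0:ℝ) 1) :=
    MeasurableSet.univ_pi fun _ => measurableSet_Icc
  have hA : MeasurableSet
      {x : Fin r → ℝ | ∀ i j, i ≠ j → 0 < W (x i) (x j) ∧ W (x i) (x j) < 1} := by
    have : {x : Fin r → ℝ | ∀ i j, i ≠ j → 0 < W (x i) (x j) ∧ W (x i) (x j) < 1} =
        ⋂ (i : Fin r) (j : Fin r) (_ : i ≠ j),
          (fun x : Fin r → ℝ => W (x i) (x j)) ⁻¹' Ioo 0 1 := by
      ext x; simp
    rw [this]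
    refine MeasurableSet.iInter fun i => MeasurableSet.iInter fun j =>
      MeasurableSet.iInter fun _ => ?_
    exact measurable_ker hW.2.1 i j measurableSet_Ioo
  refine ⟨hB.inter hA, fun h0 => h ?_⟩
  unfold KFree
  rw [ae_restrict_iff' hB, ae_iff]
  refine measure_mono_null ?_ h0
  intro x hx
  simp only [mem_ofPred_eq, Classical.not_imp] at hx
  refine ⟨hx.1, ?_⟩
  have key : ∀ i j, i < j → 0 < W (x i) (x j) ∧ W (x i) (x j) < 1 := by
    intro i j hij
    by_contra hc
    apply hx.2
    refine Finset.prod_eq_zero (Finset.mem_univ i) (Finset.prod_eq_zero (Finset.mem_univ j) ?_)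
    simp [hij, randIndicator, hc]
  intro i j hij
  rcases lt_or_gt_of_ne hij with h1 | h1
  · exact key i j h1
  · rw [hW.1]; exact key j i h1

theorem exists_points {Q : GraphClass} (hQ : IsHereditary Q) {W : ℝ → ℝ → ℝ}
    (hWQ : W ∈ limitSet Q) {r : ℕ} (hnf : ¬ KFree r (randIndicator W)) (M : ℕ) :
    ∃ x : Fin r × Fin M → ℝ, (∀ u v, u.1 ≠ v.1 → 0 < W (x u) (x v) ∧ W (x u) (x v) < 1) ∧
      ∀ F : SimpleGraph (Fin r × Fin M),
        (∀ u v, u ≠ v → (F.Adj u v → W (x u) (x v) ≠ 0) ∧ (¬ F.Adj u v → W (x u) (x v) ≠ 1)) →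
        InQ Q F := by
  classical
  have hW := hWQ.1
  obtain ⟨hE, hEpos⟩ := volume_rand_ne_zero hW hnf
  have hZ := blowup M hE hEpos
  set Z := {x : Fin r × Fin M → ℝ | ∀ φ : Fin r → Fin M, (fun i => x (i, φ i)) ∈
    ((univ.pi fun _ : Fin r => Icc (0:ℝ) 1) ∩
        {x : Fin r → ℝ | ∀ i j, i ≠ j → 0 < W (x i) (x j) ∧ W (x i) (x j) < 1})} with hZdef
  let e := Fintype.equivFin (Fin r × Fin M)
  let P : Finset ((Fin r × Fin M) × (Fin r × Fin M)) := Finset.univ.filter fun q => e q.1 < e q.2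
  have hmemP : ∀ q, q ∈ P ↔ e q.1 < e q.2 := by intro q; simp [P]
  have hae : ∀ F : SimpleGraph (Fin r × Fin M), ¬ InQ Q F →
      ∀ᵐ x ∂muV (Fin r × Fin M), ∏ q ∈ P, kerF F W q (x q.1) (x q.2) = 0 := by
    intro F hF
    have h01 : ∀ x : Fin r × Fin M → ℝ, ∏ q ∈ P, kerF F W q (x q.1) (x q.2) ∈ Icc (0:ℝ) 1 :=
      fun x => prod_mem01 P fun q => kerF_mem F hW.2.2 q _ _
    have hnp : ¬ 0 < ∫ x, ∏ q ∈ P, kerF F W q (x q.1) (x q.2) ∂muV (Fin r × Fin M) := by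
      intro hpos
      refine hF (inQ_of_density_pos hQ hWQ P ?_ ?_ ?_ F hpos)
      · intro q hq he
        rw [hmemP, he] at hq
        exact lt_irrefl _ hq
      · intro q hq hq2
        rw [hmemP] at hq hq2
        exact lt_asymm hq hq2
      · intro u v huv
        rw [hmemP, hmemP]
        exact lt_or_gt_of_ne fun h => huv (e.injective h)
    have h0 : ∫ x, ∏ q ∈ P, kerF F W q (x q.1) (x q.2) ∂muV (Fin r × Fin M) = 0 :=
      le_antisymm (not_lt.1 hnp) (integral_nonneg fun x => (h01 x).1)
    rw [integral_eq_zero_iff_of_nonneg (fun x => (h01 x).1)] at h0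
    · exact h0
    · refine integrable_of_bdd _ (measurable_prod_ker P fun q => kerF_measurable F hW.2.1 q) 1 ?_
      intro x
      rw [abs_of_nonneg (h01 x).1]; exact (h01 x).2
  have hall : ∀ᵐ x ∂muV (Fin r × Fin M), ∀ F : SimpleGraph (Fin r × Fin M), ¬ InQ Q F →
      ∏ q ∈ P, kerF F W q (x q.1) (x q.2) = 0 := by
    rw [ae_all_iff]
    intro F
    by_cases hF : InQ Q F
    · exact Eventually.of_forall fun x h => absurd hF h
    · filter_upwards [hae F hF] with x hx _ using hx
  have hex : ∃ x ∈ Z, ∀ F : SimpleGraph (Fin r × Fin M), ¬ InQ Q F →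
      ∏ q ∈ P, kerF F W q (x q.1) (x q.2) = 0 := by
    by_contra hno
    push Not at hno
    apply hZ
    rw [muV_eq, ae_restrict_iff' (MeasurableSet.univ_pi fun _ => measurableSet_Icc), ae_iff] at hall
    refine measure_mono_null ?_ hall
    intro x hx
    obtain ⟨F, hF, hF2⟩ := hno x hx
    simp only [mem_ofPred_eq, Classical.not_imp, not_forall]
    refine ⟨?_, F, hF, hF2⟩
    rintro ⟨i, a⟩ _
    exact (hx fun _ => a).1 i (mem_univ _)
  obtain ⟨x, hxZ, hx⟩ := hex
  refine ⟨x, ?_, ?_⟩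
  · rintro ⟨i, a⟩ ⟨j, b⟩ hij
    have hij' : i ≠ j := hij
    have := (hxZ fun k => if k = i then a else b).2 i j hij'
    simpa [hij'.symm] using this
  · intro F hF
    by_contra hc
    have h0 := hx F hc
    rw [Finset.prod_eq_zero_iff] at h0
    obtain ⟨q, hq, hq0⟩ := h0
    have hne : q.1 ≠ q.2 := by
      intro he
      rw [hmemP, he] at hq
      exact lt_irrefl _ hq
    have := hF q.1 q.2 hne
    by_cases hadj : F.Adj q.1 q.2
    · simp only [kerF, hadj, if_true] at hq0
      exact this.1 hadj hq0
    · simp only [kerF, hadj, if_false] at hq0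
      exact this.2 hadj (by linarith)

/-- The graph on `r` parts of size `m` with homogeneous parts and cross pattern `H`. -/
def partGraph {r m : ℕ} (c : Fin r → Prop) (H : Fin m → Fin m → Prop)
    (hH : ∀ a b, H a b → H b a) : SimpleGraph (Fin r × Fin m) where
  Adj u v := (u.1 ≠ v.1 ∧ H u.2 v.2) ∨ (u.1 = v.1 ∧ u.2 ≠ v.2 ∧ c u.1)
  symm := ⟨by
    rintro ⟨i, a⟩ ⟨j, b⟩ h
    rcases h with ⟨h1, h2⟩ | ⟨h1, h2, h3⟩
    · exact Or.inl ⟨h1.symm, hH _ _ h2⟩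
    · exact Or.inr ⟨h1.symm, h2.symm, by simp only at h1 h3 ⊢; rwa [← h1]⟩⟩
  loopless := ⟨by
    rintro ⟨i, a⟩ h
    rcases h with ⟨h1, h2⟩ | ⟨h1, h2, h3⟩
    · exact h1 rfl
    · exact h2 rfl⟩

theorem exists_partGraph {Q : GraphClass} (hQ : IsHereditary Q) {W : ℝ → ℝ → ℝ}
    (hWQ : W ∈ limitSet Q) {r : ℕ} (hnf : ¬ KFree r (randIndicator W)) (m : ℕ) 
    (H : Fin m → Fin m → Prop) (hH : ∀ a b, H a b → H b a) :
    ∃ c : Fin r → Bool, InQ Q (partGraph (fun i => c i = true) H hH) := by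
  classical
  have hW := hWQ.1
  obtain ⟨M, hM⟩ := ramsey_fin m
  obtain ⟨x, hx, hF⟩ := exists_points hQ hWQ hnf M
  let G : Fin r → SimpleGraph (Fin M) := fun i =>
    { Adj := fun a b => a ≠ b ∧ W (x (i, a)) (x (i, b)) ≠ 0
      symm := ⟨fun a b h => ⟨h.1.symm, by rw [hW.1]; exact h.2⟩⟩
      loopless := ⟨fun a h => h.1 rfl⟩ }
  choose c g hg hcg using fun i => hM (G i)
  let F : SimpleGraph (Fin r × Fin M) :=
    { Adj := fun u v => (u.1 ≠ v.1 ∧ ∃ a b, g u.1 a = u.2 ∧ g v.1 b = v.2 ∧ H a b) ∨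
        (u.1 = v.1 ∧ (G u.1).Adj u.2 v.2)
      symm := ⟨by
        rintro ⟨i, a⟩ ⟨j, b⟩ h
        rcases h with ⟨h1, a', b', h2, h3, h4⟩ | ⟨h1, h2⟩
        · exact Or.inl ⟨h1.symm, b', a', h3, h2, hH _ _ h4⟩
        · simp only at h1; subst h1; exact Or.inr ⟨rfl, h2.symm⟩⟩
      loopless := ⟨by
        rintro ⟨i, a⟩ h
        rcases h with ⟨h1, _⟩ | ⟨h1, h2⟩
        · exact h1 rfl
        · exact (G i).loopless.irrefl _ h2⟩ }
  have hFQ : InQ Q F := by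
    apply hF
    rintro ⟨i, a⟩ ⟨j, b⟩ hne
    by_cases hij : i = j
    · subst hij
      have hab : a ≠ b := fun h => hne (by rw [h])
      constructor
      · intro h
        rcases h with ⟨h1, _⟩ | ⟨h1, h2⟩
        · exact absurd rfl h1
        · exact h2.2
      · intro h h1
        apply h
        exact Or.inr ⟨rfl, hab, by simp only; rw [h1]; exact one_ne_zero⟩
    · have := hx (i, a) (j, b) hij
      exact ⟨fun _ => this.1.ne', fun _ => this.2.ne⟩
  refine ⟨c, ?_⟩
  have h2 := hFQ.comap (fun u : Fin r × Fin m => (u.1, g u.1 u.2)) (by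
    rintro ⟨i, a⟩ ⟨j, b⟩ h
    simp only [Prod.mk.injEq] at h
    obtain ⟨rfl, h⟩ := h
    rw [hg i h])
  convert h2 using 1
  ext ⟨i, a⟩ ⟨j, b⟩
  simp only [partGraph, SimpleGraph.comap_adj, F]
  by_cases hij : i = j
  · subst hij
    by_cases hab : a = b
    · subst hab; simp
    · simp [hab, hcg i a b hab]
  · simp only [hij, false_and, or_false, ne_eq, not_false_eq_true, true_and]
    constructor
    · intro h; exact ⟨a, b, rfl, rfl, h⟩
    · rintro ⟨a', b', h1, h2, h3⟩
      rwa [← hg i h1, ← hg j h2]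

/-- Rearranging the parts so that the cliques come first. -/
theorem exists_partGraph_sorted {Q : GraphClass} (hQ : IsHereditary Q) {W : ℝ → ℝ → ℝ}
    (hWQ : W ∈ limitSet Q) {r : ℕ} (hnf : ¬ KFree r (randIndicator W)) (m : ℕ) 
    (H : Fin m → Fin m → Prop) (hH : ∀ a b, H a b → H b a) :
    ∃ s : ℕ, s ≤ r ∧ InQ Q (partGraph (r := r) (fun i => (i : ℕ) < s) H hH) := by
  classical
  obtain ⟨c, hc⟩ := exists_partGraph hQ hWQ hnf m H hH
  set s := Fintype.card {i // c i = true} with hs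
  have hsr : s ≤ r := by
    have := Fintype.card_subtype_le (fun i : Fin r => c i = true)
    simpa using this
  have hcard : Fintype.card {i : Fin r // (i:ℕ) < s} = Fintype.card {i : Fin r // c i = true} := by
    rw [← hs, Fintype.card_subtype]
    have : (Finset.univ.filter fun i : Fin r => (i:ℕ) < s) =
        Finset.univ.map (Fin.castLEEmb hsr) := by
      ext i
      simp only [Finset.mem_filter, Finset.mem_univ, true_and, Finset.mem_map, Fin.castLEEmb_apply]
      constructor
      · intro h; exact ⟨⟨i, h⟩, rfl⟩
      · rintro ⟨a, rfl⟩; exact a.2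
    rw [this]; simp
  let e0 : {i : Fin r // (i:ℕ) < s} ≃ {i : Fin r // c i = true} := Fintype.equivOfCardEq hcard
  let e : Equiv.Perm (Fin r) := e0.extendSubtype
  have he : ∀ i, c (e i) = true ↔ (i:ℕ) < s := by
    intro i
    constructor
    · intro h
      by_contra hn
      exact e0.extendSubtype_not_mem i hn h
    · intro h
      exact e0.extendSubtype_mem i h
  refine ⟨s, hsr, ?_⟩
  have h2 := hc.comap (fun u : Fin r × Fin m => (e u.1, u.2)) (by
    rintro ⟨i, a⟩ ⟨j, b⟩ h
    simpa using h)
  convert h2 using 1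
  ext ⟨i, a⟩ ⟨j, b⟩
  simp [partGraph, he]

/-- The Sylvester Hadamard matrix. -/
noncomputable def hadamardFn (d : ℕ) (x y : Fin d → Bool) : ℝ :=
  ∏ i, if x i = true ∧ y i = true then (-1 : ℝ) else 1

theorem hadamardFn_symm (d : ℕ) (x y : Fin d → Bool) : hadamardFn d x y = hadamardFn d y x := by
  unfold hadamardFn
  refine Finset.prod_congr rfl fun i _ => ?_
  simp only [and_comm]

theorem hadamardFn_val (d : ℕ) (x y : Fin d → Bool) :
    hadamardFn d x y = 1 ∨ hadamardFn d x y = -1 := by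
  unfold hadamardFn
  refine Finset.prod_induction _ (fun z : ℝ => z = 1 ∨ z = -1) ?_ (Or.inl rfl) ?_
  · rintro a b (rfl | rfl) (rfl | rfl) <;> simp
  · intro i _
    split_ifs <;> simp

theorem hadamardFn_orth (d : ℕ) (x x' : Fin d → Bool) :
    ∑ y, hadamardFn d x y * hadamardFn d x' y = if x = x' then (2:ℝ) ^ d else 0 := by
  unfold hadamardFn
  simp only [← Finset.prod_mul_distrib]
  have h := Finset.prod_univ_sum (fun _ : Fin d => (Finset.univ : Finset Bool))
    (fun i b => (if x i = true ∧ b = true then (-1 : ℝ) else 1) *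
      (if x' i = true ∧ b = true then (-1 : ℝ) else 1))
  rw [Fintype.piFinset_univ] at h
  rw [← h]
  have h2 : ∀ i, ∑ b : Bool, (if x i = true ∧ b = true then (-1 : ℝ) else 1) *
      (if x' i = true ∧ b = true then (-1 : ℝ) else 1) = if x i = x' i then 2 else 0 := by
    intro i
    rw [Fintype.sum_bool]
    cases x i <;> cases x' i <;> norm_num
  simp only [h2]
  split_ifs with hx
  · subst hx; simp
  · obtain ⟨i, hi⟩ := Function.ne_iff.1 hx
    exact Finset.prod_eq_zero (Finset.mem_univ i) (by simp [hi])

theorem lindsey {X : Type*} [Fintype X] [DecidableEq X] (A : X → X → ℝ) (N : ℝ)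
    (hA : ∀ x x', ∑ y, A x y * A x' y = if x = x' then N else 0) (α β : X → ℝ) :
    (∑ x, ∑ y, A x y * (α x * β y)) ^ 2 ≤ N * (∑ x, α x ^ 2) * ∑ y, β y ^ 2 := by
  have h1 : ∑ x, ∑ y, A x y * (α x * β y) = ∑ y, (∑ x, A x y * α x) * β y := by
    rw [Finset.sum_comm]
    refine Finset.sum_congr rfl fun y _ => ?_
    rw [Finset.sum_mul]
    refine Finset.sum_congr rfl fun x _ => by ring
  have h2 : ∑ y, (∑ x, A x y * α x) ^ 2 = N * ∑ x, α x ^ 2 := by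
    calc ∑ y, (∑ x, A x y * α x) ^ 2 = ∑ y, ∑ x, ∑ x', A x y * A x' y * (α x * α x') := by
          refine Finset.sum_congr rfl fun y _ => ?_
          rw [sq, Finset.sum_mul_sum]
          refine Finset.sum_congr rfl fun x _ => Finset.sum_congr rfl fun x' _ => by ring
      _ = ∑ x, ∑ x', (∑ y, A x y * A x' y) * (α x * α x') := by
          rw [Finset.sum_comm]
          refine Finset.sum_congr rfl fun x _ => ?_
          rw [Finset.sum_comm]
          refine Finset.sum_congr rfl fun x' _ => ?_
          rw [Finset.sum_mul]
      _ = N * ∑ x, α x ^ 2 := by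
          simp only [hA, ite_mul, zero_mul, Finset.sum_ite_eq, Finset.mem_univ, if_true]
          rw [Finset.mul_sum]
          refine Finset.sum_congr rfl fun x _ => by ring
  rw [h1, ← h2]
  exact Finset.sum_mul_sq_le_sq_mul_sq _ _ _

theorem exists_hadamard (d : ℕ) : ∃ A : Fin (2 ^ d * 2 ^ d) → Fin (2 ^ d * 2 ^ d) → ℝ,
    (∀ a b, A a b = A b a) ∧ (∀ a b, A a b = 1 ∨ A a b = -1) ∧
    ∀ x x', ∑ y, A x y * A x' y = if x = x' then (2:ℝ) ^ d * 2 ^ d else 0 := by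
  have hcard : Fintype.card (Fin (2 ^ d * 2 ^ d)) = Fintype.card (Fin (d + d) → Bool) := by
    simp [pow_add]
  let e := Fintype.equivOfCardEq hcard
  refine ⟨fun a b => hadamardFn (d + d) (e a) (e b), fun a b => hadamardFn_symm _ _ _,
    fun a b => hadamardFn_val _ _ _, fun x x' => ?_⟩
  rw [Equiv.sum_comp e (fun y => hadamardFn (d + d) (e x) y * hadamardFn (d + d) (e x') y),
    hadamardFn_orth, pow_add]
  simp

theorem mem_Ioc_iff_ceil {n : ℕ} (hn : 0 < n) (i : ℕ) (x : ℝ) :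
    x ∈ Ioc ((i:ℝ) / n) (((i:ℝ) + 1) / n) ↔ ⌈(n:ℝ) * x⌉ = (i : ℤ) + 1 := by
  have hn' : (0:ℝ) < n := by exact_mod_cast hn
  rw [Int.ceil_eq_iff, mem_Ioc, div_lt_iff₀ hn', le_div_iff₀ hn']
  push_cast
  rw [mul_comm x, add_sub_cancel_right]

theorem Ioc_index_unique {n : ℕ} {i j : ℕ} {x : ℝ} (hn : 0 < n)
    (hi : x ∈ Ioc ((i:ℝ) / n) (((i:ℝ) + 1) / n)) (hj : x ∈ Ioc ((j:ℝ) / n) (((j:ℝ) + 1) / n)) :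
    i = j := by
  rw [mem_Ioc_iff_ceil hn] at hi hj
  omega

theorem exists_index {n : ℕ} (hn : 0 < n) {x : ℝ} (h0 : 0 < x) (h1 : x ≤ 1) :
    ∃ v : Fin n, x ∈ Ioc (((v:ℕ):ℝ) / n) ((((v:ℕ):ℝ) + 1) / n) := by
  have hn' : (0:ℝ) < n := by exact_mod_cast hn
  have h2 : 0 < ⌈(n:ℝ) * x⌉ := Int.ceil_pos.2 (by positivity)
  have h3 : ⌈(n:ℝ) * x⌉ ≤ n := by
    rw [Int.ceil_le]; push_cast; nlinarith
  refine ⟨⟨(⌈(n:ℝ) * x⌉ - 1).toNat, by omega⟩, ?_⟩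
  rw [mem_Ioc_iff_ceil hn]
  simp only
  omega

theorem graphonOfGraph_cell {n : ℕ} (hn : 0 < n) (G : SimpleGraph (Fin n)) {x y : ℝ} {v w : Fin n}
    (hx : x ∈ Ioc (((v:ℕ):ℝ) / n) ((((v:ℕ):ℝ) + 1) / n))
    (hy : y ∈ Ioc (((w:ℕ):ℝ) / n) ((((w:ℕ):ℝ) + 1) / n)) [Decidable (G.Adj v w)] :
    graphonOfGraph G x y = if G.Adj v w then 1 else 0 := by
  unfold graphonOfGraph
  rw [mem_Ioc_iff_ceil hn] at hx hy
  have : (∃ i j : Fin n, G.Adj i j ∧ ⌈(n : ℝ) * x⌉ = ((i : ℕ) : ℤ) + 1 ∧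
      ⌈(n : ℝ) * y⌉ = ((j : ℕ) : ℤ) + 1) ↔ G.Adj v w := by
    constructor
    · rintro ⟨i, j, h, h1, h2⟩
      have e1 : i = v := by ext; omega
      have e2 : j = w := by ext; omega
      rwa [← e1, ← e2]
    · intro h; exact ⟨v, w, h, hx, hy⟩
  simp only [this]

theorem Wrs_cell {r s : ℕ} (hr : 0 < r) {x y : ℝ} {i j : Fin r}
    (hx : x ∈ Ioc (((i:ℕ):ℝ) / r) ((((i:ℕ):ℝ) + 1) / r))
    (hy : y ∈ Ioc (((j:ℕ):ℝ) / r) ((((j:ℕ):ℝ) + 1) / r)) :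
    Wrs r s x y = if i ≠ j then 1 / 2 else if (i:ℕ) < s then 1 else 0 := by
  unfold Wrs
  have h1 : (∃ i j : Fin r, i ≠ j ∧ x ∈ Set.Ioc (((i:ℕ):ℝ)/r) ((((i:ℕ):ℝ)+1)/r) ∧
      y ∈ Set.Ioc (((j:ℕ):ℝ)/r) ((((j:ℕ):ℝ)+1)/r)) ↔ i ≠ j := by
    constructor
    · rintro ⟨i', j', h, h1, h2⟩
      have e1 : i' = i := Fin.ext (Ioc_index_unique hr h1 hx)
      have e2 : j' = j := Fin.ext (Ioc_index_unique hr h2 hy)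
      rwa [← e1, ← e2]
    · intro h; exact ⟨i, j, h, hx, hy⟩
  by_cases hij : i = j
  · subst hij
    have h2 : (∃ i : Fin r, (i:ℕ) < s ∧ x ∈ Set.Ioc (((i:ℕ):ℝ)/r) ((((i:ℕ):ℝ)+1)/r) ∧
        y ∈ Set.Ioc (((i:ℕ):ℝ)/r) ((((i:ℕ):ℝ)+1)/r)) ↔ (i:ℕ) < s := by
      constructor
      · rintro ⟨i', h, h1, h2⟩
        have e1 : i' = i := Fin.ext (Ioc_index_unique hr h1 hx)
        rwa [← e1]
      · intro h; exact ⟨i, h, hx, hy⟩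
    simp only [h1, h2, ne_eq, not_true_eq_false, if_false]
  · rw [if_pos (h1.2 hij), if_pos hij]

theorem isGraphon_Wrs (r s : ℕ) : IsGraphon (Wrs r s) := by
  classical
  refine ⟨?_, ?_, ?_⟩
  · intro x y
    unfold Wrs
    have h1 : (∃ i j : Fin r, i ≠ j ∧ x ∈ Set.Ioc (((i:ℕ):ℝ)/r) ((((i:ℕ):ℝ)+1)/r) ∧
      y ∈ Set.Ioc (((j:ℕ):ℝ)/r) ((((j:ℕ):ℝ)+1)/r)) ↔
      (∃ i j : Fin r, i ≠ j ∧ y ∈ Set.Ioc (((i:ℕ):ℝ)/r) ((((i:ℕ):ℝ)+1)/r) ∧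
      x ∈ Set.Ioc (((j:ℕ):ℝ)/r) ((((j:ℕ):ℝ)+1)/r)) :=
      ⟨fun ⟨i, j, h, a, b⟩ => ⟨j, i, h.symm, b, a⟩, fun ⟨i, j, h, a, b⟩ => ⟨j, i, h.symm, b, a⟩⟩
    have h2 : (∃ i : Fin r, (i:ℕ) < s ∧ x ∈ Set.Ioc (((i:ℕ):ℝ)/r) ((((i:ℕ):ℝ)+1)/r) ∧
        y ∈ Set.Ioc (((i:ℕ):ℝ)/r) ((((i:ℕ):ℝ)+1)/r)) ↔
        (∃ i : Fin r, (i:ℕ) < s ∧ y ∈ Set.Ioc (((i:ℕ):ℝ)/r) ((((i:ℕ):ℝ)+1)/r) ∧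
        x ∈ Set.Ioc (((i:ℕ):ℝ)/r) ((((i:ℕ):ℝ)+1)/r)) :=
      ⟨fun ⟨i, h, a, b⟩ => ⟨i, h, b, a⟩, fun ⟨i, h, a, b⟩ => ⟨i, h, b, a⟩⟩
    simp only [h1, h2]
  · unfold Wrs Function.uncurry
    have hm : ∀ i j : Fin r, MeasurableSet {p : ℝ × ℝ |
        p.1 ∈ Set.Ioc (((i:ℕ):ℝ)/r) ((((i:ℕ):ℝ)+1)/r) ∧
        p.2 ∈ Set.Ioc (((j:ℕ):ℝ)/r) ((((j:ℕ):ℝ)+1)/r)} := fun i j =>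
      measurableSet_Ioc.prod measurableSet_Ioc
    refine Measurable.ite ?_ measurable_const (Measurable.ite ?_ measurable_const measurable_const)
    · have : {p : ℝ × ℝ | ∃ i j : Fin r, i ≠ j ∧ p.1 ∈ Set.Ioc (((i:ℕ):ℝ)/r) ((((i:ℕ):ℝ)+1)/r) ∧
        p.2 ∈ Set.Ioc (((j:ℕ):ℝ)/r) ((((j:ℕ):ℝ)+1)/r)} = ⋃ (i : Fin r) (j : Fin r) (_ : i ≠ j),
          {p : ℝ × ℝ | p.1 ∈ Set.Ioc (((i:ℕ):ℝ)/r) ((((i:ℕ):ℝ)+1)/r) ∧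
        p.2 ∈ Set.Ioc (((j:ℕ):ℝ)/r) ((((j:ℕ):ℝ)+1)/r)} := by
        ext p; simp only [mem_iUnion, mem_ofPred_eq, exists_prop]
      rw [this]
      exact MeasurableSet.iUnion fun i => MeasurableSet.iUnion fun j =>
        MeasurableSet.iUnion fun _ => hm i j
    · have : {p : ℝ × ℝ | ∃ i : Fin r, (i:ℕ) < s ∧ p.1 ∈ Set.Ioc (((i:ℕ):ℝ)/r) ((((i:ℕ):ℝ)+1)/r) ∧
        p.2 ∈ Set.Ioc (((i:ℕ):ℝ)/r) ((((i:ℕ):ℝ)+1)/r)} = ⋃ (i : Fin r) (_ : (i:ℕ) < s),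
          {p : ℝ × ℝ | p.1 ∈ Set.Ioc (((i:ℕ):ℝ)/r) ((((i:ℕ):ℝ)+1)/r) ∧
        p.2 ∈ Set.Ioc (((i:ℕ):ℝ)/r) ((((i:ℕ):ℝ)+1)/r)} := by
        ext p; simp only [mem_iUnion, mem_ofPred_eq, exists_prop]
      rw [this]
      exact MeasurableSet.iUnion fun i => MeasurableSet.iUnion fun _ => hm i i
  · intro x y
    unfold Wrs
    split_ifs <;> norm_num

/-- Integral of a function that is constant on cells. -/
theorem integral_cells {n : ℕ} (hn : 0 < n) (U : ℝ → ℝ → ℝ) (D : Fin n → Fin n → ℝ)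
    (hU : ∀ (v w : Fin n) (x y : ℝ), x ∈ Ioc (((v:ℕ):ℝ) / n) ((((v:ℕ):ℝ) + 1) / n) →
      y ∈ Ioc (((w:ℕ):ℝ) / n) ((((w:ℕ):ℝ) + 1) / n) → U x y = D v w)
    {S T : Set ℝ} (hS : MeasurableSet S) (hT : MeasurableSet T) (hS1 : S ⊆ Icc 0 1)
    (hT1 : T ⊆ Icc 0 1) :
    ∃ α β : Fin n → ℝ, (∀ v, 0 ≤ α v ∧ α v ≤ 1 / n) ∧ (∀ v, 0 ≤ β v ∧ β v ≤ 1 / n) ∧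
      ∫ p in S ×ˢ T, U p.1 p.2 = ∑ v, ∑ w, D v w * (α v * β w) := by
  classical
  let I : Fin n → Set ℝ := fun v => Ioc (((v:ℕ):ℝ) / n) ((((v:ℕ):ℝ) + 1) / n)
  have hI : ∀ v, MeasurableSet (I v) := fun v => measurableSet_Ioc
  have hIvol : ∀ v, volume (I v) = ENNReal.ofReal (1 / n) := by
    intro v
    simp only [I, Real.volume_Ioc]
    congr 1; ring
  have key : ∀ S : Set ℝ, ∀ v, 0 ≤ (volume.restrict S).real (I v) ∧
      (volume.restrict S).real (I v) ≤ 1 / n := by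
    intro S v
    refine ⟨measureReal_nonneg, ?_⟩
    have h : volume.restrict S (I v) ≤ ENNReal.ofReal (1 / n) :=
      (Measure.restrict_apply_le S (I v)).trans (hIvol v).le
    have := ENNReal.toReal_mono ENNReal.ofReal_ne_top h
    rwa [ENNReal.toReal_ofReal (by positivity)] at this
  refine ⟨fun v => (volume.restrict S).real (I v), fun v => (volume.restrict T).real (I v),
    key S, key T, ?_⟩
  have hfinS : IsFiniteMeasure (volume.restrict S) :=
    ⟨by rw [Measure.restrict_apply_univ]
        exact (measure_mono hS1).trans_lt (by simp)⟩
  have hfinT : IsFiniteMeasure (volume.restrict T) :=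
    ⟨by rw [Measure.restrict_apply_univ]
        exact (measure_mono hT1).trans_lt (by simp)⟩
  have hμ : (volume : Measure (ℝ × ℝ)).restrict (S ×ˢ T) =
      (volume.restrict S).prod (volume.restrict T) := by
    rw [Measure.prod_restrict]; rfl
  have hae : ∀ᵐ p ∂(volume : Measure (ℝ × ℝ)).restrict (S ×ˢ T), U p.1 p.2 =
      ∑ v, ∑ w, D v w * ((I v).indicator 1 p.1 * (I w).indicator 1 p.2) := by
    have hS0 : ∀ᵐ x ∂volume.restrict S, x ∈ Ioc (0:ℝ) 1 := by
      rw [ae_restrict_iff' hS]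
      have : ∀ᵐ x : ℝ, x ≠ 0 := by simp [ae_iff]
      filter_upwards [this] with x hx hxS
      exact ⟨lt_of_le_of_ne (hS1 hxS).1 hx.symm, (hS1 hxS).2⟩
    have hT0 : ∀ᵐ x ∂volume.restrict T, x ∈ Ioc (0:ℝ) 1 := by
      rw [ae_restrict_iff' hT]
      have : ∀ᵐ x : ℝ, x ≠ 0 := by simp [ae_iff]
      filter_upwards [this] with x hx hxS
      exact ⟨lt_of_le_of_ne (hT1 hxS).1 hx.symm, (hT1 hxS).2⟩
    rw [hμ]
    filter_upwards [Measure.quasiMeasurePreserving_fst.ae hS0,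
      Measure.quasiMeasurePreserving_snd.ae hT0] with p h1 h2
    obtain ⟨v, hv⟩ := exists_index hn h1.1 h1.2
    obtain ⟨w, hw⟩ := exists_index hn h2.1 h2.2
    rw [hU v w _ _ hv hw]
    have hind : ∀ (x : ℝ) (v : Fin n), x ∈ I v → ∀ u, (I u).indicator (1 : ℝ → ℝ) x =
        if u = v then 1 else 0 := by
      intro x v hx u
      by_cases huv : u = v
      · subst huv; simp [hx]
      · rw [if_neg huv, indicator_of_notMem]
        intro hu
        exact huv (Fin.ext (Ioc_index_unique hn hu hx))
    simp only [hind p.1 v hv, hind p.2 w hw]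
    simp
  rw [integral_congr_ae hae, hμ]
  have hInteg : ∀ v w, Integrable (fun p : ℝ × ℝ =>
      D v w * ((I v).indicator 1 p.1 * (I w).indicator (1 : ℝ → ℝ) p.2))
      ((volume.restrict S).prod (volume.restrict T)) := by
    intro v w
    refine Integrable.const_mul ?_ _
    refine Integrable.mul_prod (f := (I v).indicator (1 : ℝ → ℝ))
      (g := (I w).indicator (1 : ℝ → ℝ)) ?_ ?_
    · exact (integrable_const (1:ℝ)).indicator (hI v)
    · exact (integrable_const (1:ℝ)).indicator (hI w)
  rw [integral_finsetSum _ fun v _ => integrable_finsetSum _ fun w _ => hInteg v w]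
  refine Finset.sum_congr rfl fun v _ => ?_
  rw [integral_finsetSum _ fun w _ => hInteg v w]
  refine Finset.sum_congr rfl fun w _ => ?_
  rw [integral_const_mul, integral_prod_mul, integral_indicator_one (hI v),
    integral_indicator_one (hI w)]

theorem cell_sub {r N : ℕ} (hr : 0 < r) (hN : 0 < N) (i : Fin r) (a : Fin N) {x : ℝ}
    (hx : x ∈ Ioc (((finProdFinEquiv (i, a) : Fin (r * N)) : ℕ) / ((r * N : ℕ) : ℝ))
      ((((finProdFinEquiv (i, a) : Fin (r * N)) : ℕ) + 1 : ℝ) / ((r * N : ℕ) : ℝ))) :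
    x ∈ Ioc (((i:ℕ):ℝ) / r) ((((i:ℕ):ℝ) + 1) / r) := by
  have hr' : (0:ℝ) < r := by exact_mod_cast hr
  have hN' : (0:ℝ) < N := by exact_mod_cast hN
  have ha : ((a:ℕ):ℝ) + 1 ≤ N := by exact_mod_cast a.2
  have ha0 : (0:ℝ) ≤ ((a:ℕ):ℝ) := by positivity
  simp only [finProdFinEquiv_apply_val, mem_Ioc] at hx ⊢
  push_cast at hx
  rw [div_lt_iff₀ (by positivity), le_div_iff₀ (by positivity)] at hx
  rw [div_lt_iff₀ hr', le_div_iff₀ hr']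
  obtain ⟨h1, h2⟩ := hx
  constructor
  · by_contra hc
    push Not at hc
    nlinarith
  · by_contra hc
    push Not at hc
    nlinarith

theorem cut_bound {r s N K : ℕ} (hr : 0 < r) (hK : 0 < K) (hNK : N = K * K)
    (A : Fin N → Fin N → ℝ) (hA : ∀ a b, A a b = 1 ∨ A a b = -1)
    (horth : ∀ x x', ∑ y, A x y * A x' y = if x = x' then (N:ℝ) else 0)
    (hH : ∀ a b, A a b = -1 → A b a = -1) :
    cutNorm (fun x y => graphonOfGraph ((partGraph (r := r) (fun i => (i:ℕ) < s)
      (fun a b => A a b = -1) hH).comap finProdFinEquiv.symm) x y - Wrs r s x y) ≤ 1 / K := by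
  classical
  have hN : 0 < N := by rw [hNK]; positivity
  have hn : 0 < r * N := Nat.mul_pos hr hN
  have hr' : (0:ℝ) < r := by exact_mod_cast hr
  have hN' : (0:ℝ) < N := by exact_mod_cast hN
  have hK' : (0:ℝ) < K := by exact_mod_cast hK
  have hK1 : (1:ℝ) ≤ K := by exact_mod_cast hK
  have hNK' : (N:ℝ) = K * K := by exact_mod_cast hNK
  set G := (partGraph (r := r) (fun i => (i:ℕ) < s) (fun a b => A a b = -1) hH).comap
    (finProdFinEquiv (m := r) (n := N)).symm with hG
  let D0 : Fin r × Fin N → Fin r × Fin N → ℝ := fun u v =>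
    if u.1 ≠ v.1 then -(1/2) * A u.2 v.2 else if u.2 = v.2 ∧ (u.1 : ℕ) < s then -1 else 0
  let D : Fin (r * N) → Fin (r * N) → ℝ := fun v w => D0 (finProdFinEquiv.symm v) (finProdFinEquiv.symm w)
  have hD : ∀ (v w : Fin (r * N)) (x y : ℝ),
      x ∈ Ioc (((v:ℕ):ℝ) / (r * N : ℕ)) ((((v:ℕ):ℝ) + 1) / (r * N : ℕ)) →
      y ∈ Ioc (((w:ℕ):ℝ) / (r * N : ℕ)) ((((w:ℕ):ℝ) + 1) / (r * N : ℕ)) →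
      graphonOfGraph G x y - Wrs r s x y = D v w := by
    intro v w x y hx hy
    rw [graphonOfGraph_cell hn G hx hy]
    obtain ⟨⟨i, a⟩, rfl⟩ := finProdFinEquiv.surjective v
    obtain ⟨⟨j, b⟩, rfl⟩ := finProdFinEquiv.surjective w
    rw [Wrs_cell hr (cell_sub hr hN i a hx) (cell_sub hr hN j b hy)]
    simp only [D, D0, hG, SimpleGraph.comap_adj, Equiv.symm_apply_apply, partGraph]
    by_cases hij : i = j
    · subst hij
      by_cases hab : a = b
      · subst hab
        by_cases his : (i:ℕ) < s <;> simp [his]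
      · by_cases his : (i:ℕ) < s <;> simp [his, hab]
    · rcases hA a b with h | h <;> simp [hij, h] <;> norm_num
  refine csSup_le ⟨_, ∅, ∅, MeasurableSet.empty, MeasurableSet.empty, empty_subset _,
    empty_subset _, rfl⟩ ?_
  rintro _ ⟨S, T, hS, hT, hS1, hT1, rfl⟩
  obtain ⟨α, β, hα, hβ, heq⟩ := integral_cells hn _ D hD hS hT hS1 hT1
  rw [heq]
  have hreidx : ∑ v, ∑ w, D v w * (α v * β w) = ∑ i : Fin r, ∑ j : Fin r, ∑ a : Fin N, ∑ b : Fin N,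
      D0 (i, a) (j, b) * (α (finProdFinEquiv (i, a)) * β (finProdFinEquiv (j, b))) := by
    rw [← Equiv.sum_comp finProdFinEquiv, Fintype.sum_prod_type]
    refine Finset.sum_congr rfl fun i _ => ?_
    rw [Finset.sum_comm (s := (Finset.univ : Finset (Fin r)))]
    refine Finset.sum_congr rfl fun a _ => ?_
    rw [← Equiv.sum_comp finProdFinEquiv, Fintype.sum_prod_type]
    simp only [D, Equiv.symm_apply_apply]
  rw [hreidx]
  set n : ℝ := ((r * N : ℕ) : ℝ) with hn_def
  have hnpos : 0 < n := by rw [hn_def]; exact_mod_cast hn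
  have hblock : ∀ i j : Fin r, |∑ a : Fin N, ∑ b : Fin N,
      D0 (i, a) (j, b) * (α (finProdFinEquiv (i, a)) * β (finProdFinEquiv (j, b)))| ≤
      K * N / n ^ 2 := by
    intro i j
    by_cases hij : i = j
    · subst hij
      have h1 : ∀ a : Fin N, |∑ b : Fin N,
          D0 (i, a) (i, b) * (α (finProdFinEquiv (i, a)) * β (finProdFinEquiv (i, b)))| ≤
          1 / n ^ 2 := by
        intro a
        rw [Finset.sum_eq_single a]
        · have hD1 : |D0 (i, a) (i, a)| ≤ 1 := by
            simp only [D0, ne_eq, not_true_eq_false, if_false, true_and]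
            split_ifs <;> simp
          have hα1 := hα (finProdFinEquiv (i, a))
          have hβ1 := hβ (finProdFinEquiv (i, a))
          rw [abs_mul, abs_of_nonneg (mul_nonneg hα1.1 hβ1.1)]
          calc _ ≤ 1 * (1 / n * (1 / n)) :=
                mul_le_mul hD1 (mul_le_mul hα1.2 hβ1.2 hβ1.1 (by positivity))
                  (mul_nonneg hα1.1 hβ1.1) zero_le_one
            _ = 1 / n ^ 2 := by field_simp
        · intro b _ hb
          simp [D0, hb.symm]
        · simp
      calc _ ≤ ∑ a : Fin N, 1 / n ^ 2 :=
            (Finset.abs_sum_le_sum_abs _ _).trans (Finset.sum_le_sum fun a _ => h1 a)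
        _ = 1 * N / n ^ 2 := by simp; field_simp
        _ ≤ K * N / n ^ 2 := by gcongr
    · have h2 : ∑ a : Fin N, ∑ b : Fin N,
          D0 (i, a) (j, b) * (α (finProdFinEquiv (i, a)) * β (finProdFinEquiv (j, b))) =
          -(1/2) * ∑ a : Fin N, ∑ b : Fin N,
          A a b * (α (finProdFinEquiv (i, a)) * β (finProdFinEquiv (j, b))) := by
        simp only [Finset.mul_sum]
        refine Finset.sum_congr rfl fun a _ => Finset.sum_congr rfl fun b _ => ?_
        simp only [D0, ne_eq, hij, not_false_eq_true, if_true]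
        ring
      have hsq : ∀ (γ : Fin (r * N) → ℝ) (_ : ∀ v, 0 ≤ γ v ∧ γ v ≤ 1 / n) (i : Fin r),
          ∑ a : Fin N, γ (finProdFinEquiv (i, a)) ^ 2 ≤ N / n ^ 2 := by
        intro γ hγ i
        calc _ ≤ ∑ a : Fin N, (1 / n) ^ 2 :=
              Finset.sum_le_sum fun a _ => pow_le_pow_left₀ (hγ _).1 (hγ _).2 2
          _ = N / n ^ 2 := by simp; field_simp
      have hl := lindsey A N horth (fun a => α (finProdFinEquiv (i, a)))
        (fun b => β (finProdFinEquiv (j, b)))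
      have h3 : (∑ a : Fin N, ∑ b : Fin N,
          A a b * (α (finProdFinEquiv (i, a)) * β (finProdFinEquiv (j, b)))) ^ 2 ≤
          (K * N / n ^ 2) ^ 2 := by
        refine hl.trans ?_
        calc _ ≤ (N:ℝ) * (N / n ^ 2) * (N / n ^ 2) := by
              gcongr
              · exact hsq α hα i
              · exact hsq β hβ j
          _ = (K * N / n ^ 2) ^ 2 := by rw [hNK']; field_simp
      have h4 := abs_le_of_sq_le_sq h3 (by positivity)
      rw [h2, abs_mul]
      have : |(-(1/2) : ℝ)| = 1 / 2 := by norm_num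
      rw [this]
      have h5 := h4
      have := abs_nonneg (∑ a : Fin N, ∑ b : Fin N,
          A a b * (α (finProdFinEquiv (i, a)) * β (finProdFinEquiv (j, b))))
      linarith
  calc _ ≤ ∑ i : Fin r, ∑ j : Fin r, (K * N / n ^ 2 : ℝ) := by
        refine (Finset.abs_sum_le_sum_abs _ _).trans (Finset.sum_le_sum fun i _ => ?_)
        exact (Finset.abs_sum_le_sum_abs _ _).trans (Finset.sum_le_sum fun j _ => hblock i j)
    _ = 1 / K := by
        simp only [Finset.sum_const, Finset.card_univ, Fintype.card_fin, nsmul_eq_mul]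
        rw [hn_def]
        push_cast
        rw [hNK']
        field_simp

theorem deltaCut_le {W₁ W₂ : ℝ → ℝ → ℝ} : 
    0 ≤ deltaCut W₁ W₂ ∧ deltaCut W₁ W₂ ≤ cutNorm (fun x y => W₁ x y - W₂ x y) := by
  have h0 : ∀ U, 0 ≤ cutNorm U := by
    intro U
    refine Real.sSup_nonneg ?_
    rintro _ ⟨S, T, -, -, -, -, rfl⟩
    exact abs_nonneg _
  constructor
  · refine Real.sInf_nonneg ?_
    rintro _ ⟨σ₁, σ₂, -, -, rfl⟩
    exact h0 _
  · refine csInf_le ⟨0, ?_⟩ ⟨id, id, isMPSelf_id, isMPSelf_id, rfl⟩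
    rintro _ ⟨σ₁, σ₂, -, -, rfl⟩
    exact h0 _

theorem main_aux (Q : GraphClass) (hQ : IsHereditary Q) (r : ℕ) (hr : 1 ≤ r)
    (W : ℝ → ℝ → ℝ) (hWQ : W ∈ limitSet Q)
    (hnotfree : ¬ KFree r (randIndicator W)) :
    ∃ s : ℕ, s ≤ r ∧ Wrs r s ∈ limitSet Q := by
  classical
  have step : ∀ d : ℕ, ∃ s : Fin (r + 1), ∃ G ∈ Q (r * (2 ^ d * 2 ^ d)),
      deltaCut (graphonOfGraph G) (Wrs r s) ≤ 1 / 2 ^ d := by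
    intro d
    obtain ⟨A, hsym, hval, horth⟩ := exists_hadamard d
    have hH : ∀ a b, A a b = -1 → A b a = -1 := fun a b h => by rw [hsym]; exact h
    obtain ⟨s, hs, hin⟩ := exists_partGraph_sorted hQ hWQ hnotfree (2 ^ d * 2 ^ d)
      (fun a b => A a b = -1) hH
    refine ⟨⟨s, by omega⟩, _, hin _ finProdFinEquiv.symm finProdFinEquiv.symm.injective, ?_⟩
    refine deltaCut_le.2.trans ?_
    have := cut_bound (s := s) (r := r) (N := 2 ^ d * 2 ^ d) (K := 2 ^ d) hr (by positivity) rfl A hval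
      (by intro x x'; rw [horth]; push_cast; rfl) hH
    simpa using this
  choose s G hGQ hG using step
  obtain ⟨s0, hs0⟩ := Finite.exists_infinite_fiber s
  have hinf : (s ⁻¹' {s0}).Infinite := Set.infinite_coe_iff.1 hs0
  have hfreq : ∃ᶠ d in atTop, s d = s0 := by
    rw [Nat.frequently_atTop_iff_infinite]; exact hinf
  obtain ⟨φ, hφ, hφs⟩ := extraction_of_frequently_atTop hfreq
  refine ⟨s0, by omega, isGraphon_Wrs r s0, fun k => r * (2 ^ φ k * 2 ^ φ k), fun k => G (φ k),
    fun k => hGQ _, ?_, ?_⟩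
  · refine tendsto_atTop_mono (fun k => ?_) hφ.tendsto_atTop
    have h1 : φ k < 2 ^ φ k := Nat.lt_two_pow_self
    have h2 : 1 ≤ 2 ^ φ k := Nat.one_le_two_pow
    nlinarith [Nat.mul_le_mul hr (Nat.mul_le_mul h1.le h2)]
  · have ht : Tendsto (fun k => (1:ℝ) / 2 ^ φ k) atTop (nhds 0) := by
      have := (tendsto_pow_atTop_nhds_zero_of_lt_one (r := (1/2:ℝ)) (by norm_num)
        (by norm_num)).comp hφ.tendsto_atTop
      refine this.congr fun k => ?_
      simp
    refine squeeze_zero (fun k => deltaCut_le.1) (fun k => ?_) ht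
    have := hG (φ k)
    rwa [hφs k] at this

/-- Lemma 7.2: if `Q` is hereditary and some `W ∈ Q̂` has a randomness
support graphon that is not `K_r`-free, then `W^{(r,s)} ∈ Q̂` for some `s ≤ r`. -/
theorem stmt14 (Q : GraphClass) (hQ : IsHereditary Q) (r : ℕ) (hr : 1 ≤ r)
    (W : ℝ → ℝ → ℝ) (hWQ : W ∈ limitSet Q)
    (hnotfree : ¬ KFree r (randIndicator W)) :
    ∃ s : ℕ, s ≤ r ∧ Wrs r s ∈ limitSet Q := by
  exact main_aux Q hQ r hr W hWQ hnotfree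

end
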